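/- arXiv:1705.07630 — 7 statements merged into one kernel-verified Lean document; each statement's English description precedes it below -/
import Mathlib

section
/- Let P be a finite poset with unique minimal element x₀ and let k be a field. The Hibi ring R_k(H) is an integral domain which is integrally closed in its field of fractions (i.e., R_k(H) is a normal domain). -/
open MvPolynomial

/-!
A monomial lies in the Hibi ring exactly when its exponent is antitone: an antitone exponent is the
sum of the indicator functions of its superlevel sets, which are poset ideals. Each condition
`m y ≤ m x`, for `x ≤ y`, says that the weight `m x - m y` is nonnegative, and the least weight
occurring in a polynomial is a valuation. Hence the Hibi ring is cut out of the polynomial ring by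
valuations, so it is integrally closed in the polynomial ring, which is itself normal.
-/

section IntegralClosure

theorem addValuation_nonneg_of_isIntegral {O R Γ : Type*} [CommRing O] [CommRing R] [Algebra O R]
    [LinearOrderedAddCommGroupWithTop Γ] (v : AddValuation R Γ)
    (hv : ∀ a : O, 0 ≤ v (algebraMap O R a)) {x : R} (hx : IsIntegral O x) : 0 ≤ v x := by
  let toInteger : O →+* v.toValuation.integer := (algebraMap O R).codRestrict _ hv
  have hx_integer : IsIntegral v.toValuation.integer x :=
    hx.map_of_comp_eq toInteger (RingHom.id R) rfl
  exact (Valuation.integer.integers v.toValuation).mem_of_integral hx_integer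

attribute [local instance] MvPolynomial.algebraMvPolynomial in
instance isIntegrallyClosed_mvPolynomial {σ R : Type*} [CommRing R] [IsDomain R]
    [IsIntegrallyClosed R] : IsIntegrallyClosed (MvPolynomial σ R) := by
  let K := FractionRing R
  have hinj : Function.Injective (algebraMap (MvPolynomial σ R) (MvPolynomial σ K)) :=
    map_injective _ (IsFractionRing.injective R K)
  have : FaithfulSMul (MvPolynomial σ R) (MvPolynomial σ K) :=
    (faithfulSMul_iff_algebraMap_injective _ _).mpr hinj
  have : IsIntegrallyClosedIn (MvPolynomial σ R) (MvPolynomial σ K) := by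
    refine isIntegrallyClosedIn_iff.mpr ⟨hinj, fun {f} hf => ?_⟩
    refine mem_range_map_iff_coeffs_subset.mpr fun c hc => ?_
    obtain ⟨m, -, rfl⟩ := mem_coeffs_iff.mp hc
    exact IsIntegrallyClosed.isIntegral_iff.mp (isIntegral_iff_isIntegral_coeff.mp hf m)
  exact .of_isIntegrallyClosed_of_isIntegrallyClosedIn _ (MvPolynomial σ K)

end IntegralClosure

section WeightExpansion

variable {σ k Γ : Type*} [AddCommMonoid Γ] [PartialOrder Γ] [IsOrderedCancelAddMonoid Γ]
  [CommSemiring k]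

/-- The expansion of a polynomial as a Hahn series whose coefficient at `g` is the component of
weight `g`; the coefficients stay polynomials so that distinct monomials of equal weight do not
cancel. -/
noncomputable def weightExpansion (w : σ → Γ) :
    MvPolynomial σ k →ₐ[k] HahnSeries Γ (MvPolynomial σ k) :=
  aeval fun i => HahnSeries.single (w i) (X i)

theorem weightExpansion_monomial (w : σ → Γ) (m : σ →₀ ℕ) (c : k) :
    weightExpansion w (monomial m c) = HahnSeries.single (Finsupp.weight w m) (monomial m c) := by
  induction m using Finsupp.induction_linear generalizing c with
  | zero =>
    rw [map_zero, ← C_apply, ← algebraMap_eq, AlgHom.commutes, HahnSeries.algebraMap_apply,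
      HahnSeries.C_apply]
  | add m n hm hn =>
    rw [← mul_one c, ← monomial_mul, map_mul, hm, hn, HahnSeries.single_mul_single, map_add]
  | single i n =>
    rw [← C_mul_X_pow_eq_monomial, map_mul, map_pow, ← algebraMap_eq, AlgHom.commutes,
      weightExpansion, aeval_X, HahnSeries.algebraMap_apply, HahnSeries.C_apply,
      HahnSeries.single_pow, HahnSeries.single_mul_single, zero_add, Finsupp.weight_single]

theorem coeff_weightExpansion (w : σ → Γ) (f : MvPolynomial σ k) (g : Γ) :
    (weightExpansion w f).coeff g = weightedHomogeneousComponent w g f := by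
  classical
  induction f using MvPolynomial.induction_on' with
  | monomial m c =>
    have hmono := isWeightedHomogeneous_monomial w m c rfl
    rw [weightExpansion_monomial, HahnSeries.coeff_single,
      weightedHomogeneousComponent_of_mem hmono]
  | add p q hp hq => rw [map_add, HahnSeries.coeff_add, hp, hq, map_add]

end WeightExpansion

section WeightValuation

variable {σ k Γ : Type*} [AddCancelCommMonoid Γ] [LinearOrder Γ] [IsOrderedCancelAddMonoid Γ]
  [CommRing k] [IsDomain k]

/-- The valuation sending a polynomial to the least weight of its monomials, and `0` to `⊤`. -/
noncomputable def weightValuation (w : σ → Γ) : AddValuation (MvPolynomial σ k) (WithTop Γ) :=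
  (HahnSeries.addVal Γ (MvPolynomial σ k)).comap (weightExpansion w).toRingHom

theorem coe_le_weightValuation_iff {w : σ → Γ} {f : MvPolynomial σ k} {g : Γ} :
    (g : WithTop Γ) ≤ weightValuation w f ↔ ∀ m ∈ f.support, g ≤ Finsupp.weight w m := by
  classical
  have hval : weightValuation w f = (weightExpansion w f).orderTop := HahnSeries.addVal_apply
  simp only [hval, HahnSeries.le_orderTop_iff_forall, WithTop.coe_lt_coe, coeff_weightExpansion,
    MvPolynomial.ext_iff, coeff_weightedHomogeneousComponent, coeff_zero, ite_eq_right_iff,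
    mem_support_iff]
  constructor
  · intro h m hm
    by_contra! hlt
    exact hm (h _ hlt m rfl)
  · rintro h _ hlt m rfl
    by_contra hm
    exact (h m hm).not_gt hlt

end WeightValuation

/-- The Hibi ring of `P`, generated by the squarefree monomials of the nonempty finite poset
ideals of `P`. -/
noncomputable def hibiRing (k P : Type*) [CommSemiring k] [LE P] :
    Subalgebra k (MvPolynomial P k) :=
  Algebra.adjoin k {f : MvPolynomial P k |
    ∃ I : Finset P, I.Nonempty ∧ IsLowerSet (I : Set P) ∧ f = ∏ x ∈ I, X x}

section MonomialBasis

variable {σ k P : Type*}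

theorem monomial_one_eq_prod_superlevel [CommSemiring k] (m : σ →₀ ℕ) :
    monomial m (1 : k) =
      ∏ j ∈ Finset.range (m.support.sup m), ∏ x ∈ m.support with j < m x, X x := by
  calc monomial m (1 : k) = ∏ x ∈ m.support, ∏ _j ∈ Finset.range (m x), X x := by
        simp only [monomial_eq, C_1, one_mul, Finsupp.prod, Finset.prod_const, Finset.card_range]
    _ = ∏ j ∈ Finset.range (m.support.sup m), ∏ x ∈ m.support with j < m x, X x := by
        refine Finset.prod_comm' fun x j => ?_
        simp only [Finset.mem_range, Finset.mem_filter]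
        exact ⟨fun ⟨hx, hj⟩ => ⟨⟨hx, hj⟩, hj.trans_le (Finset.le_sup hx)⟩, fun h => h.1⟩

theorem monomial_mem_hibiRing [CommSemiring k] [Preorder P] {m : P →₀ ℕ} (hm : Antitone m)
    (c : k) : monomial m c ∈ hibiRing k P := by
  rw [← mul_one c, ← smul_eq_mul, ← smul_monomial, monomial_one_eq_prod_superlevel]
  refine (hibiRing k P).smul_mem (prod_mem fun j hj => ?_) c
  refine Algebra.subset_adjoin ⟨m.support.filter (j < m ·), ?_, ?_, rfl⟩
  · obtain ⟨x, hx, hjx⟩ := Finset.lt_sup_iff.mp (Finset.mem_range.mp hj)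
    exact ⟨x, Finset.mem_filter.mpr ⟨hx, hjx⟩⟩
  · intro y x hxy hy
    have hjx : j < m x := (Finset.mem_filter.mp hy).2.trans_le (hm hxy)
    exact Finset.mem_filter.mpr ⟨Finsupp.mem_support_iff.mpr hjx.ne_bot, hjx⟩

theorem antitone_sum_single_of_isLowerSet [Preorder P] {I : Finset P}
    (hI : IsLowerSet (I : Set P)) : Antitone (∑ i ∈ I, Finsupp.single i 1 : P →₀ ℕ) := by
  classical
  intro x y hxy
  have hmem : y ∈ I → x ∈ I := fun hy => hI hxy hy
  simp only [Finsupp.finsetSum_apply, Finsupp.single_apply, Finset.sum_ite_eq']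
  split_ifs <;> simp_all

theorem mem_hibiRing_iff [CommSemiring k] [Preorder P] {f : MvPolynomial P k} :
    f ∈ hibiRing k P ↔ ∀ m ∈ f.support, Antitone m := by
  classical
  refine ⟨fun hf => ?_, fun h => ?_⟩
  · induction hf using Algebra.adjoin_induction with
    | mem f hf =>
      obtain ⟨I, -, hI, rfl⟩ := hf
      have hprod : ∏ x ∈ I, (X x : MvPolynomial P k) = monomial (∑ x ∈ I, Finsupp.single x 1) 1 :=
        (monomial_sum_one I fun x => Finsupp.single x 1).symm
      intro m hm
      rw [hprod] at hm
      rw [Finset.mem_singleton.mp (support_monomial_subset hm)]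
      exact antitone_sum_single_of_isLowerSet hI
    | algebraMap c =>
      intro m hm
      rw [Finset.mem_singleton.mp (support_monomial_subset hm)]
      exact antitone_const
    | add f g _ _ hf hg =>
      intro m hm
      exact (Finset.mem_union.mp (support_add hm)).elim (hf m) (hg m)
    | mul f g _ _ hf hg =>
      intro m hm
      obtain ⟨a, ha, b, hb, rfl⟩ := Finset.mem_add.mp (support_mul f g hm)
      exact (hf a ha).add (hg b hb)
  · rw [f.as_sum]
    exact sum_mem fun m hm => monomial_mem_hibiRing (h m hm) _

end MonomialBasis

section Normality

variable {k P : Type*}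

theorem antitone_iff_weight_nonneg [Preorder P] [DecidableEq P] {m : P →₀ ℕ} :
    Antitone m ↔
      ∀ x y, x ≤ y → 0 ≤ Finsupp.weight (Pi.single x 1 - Pi.single y 1 : P → ℤ) m := by
  have hweight (x y : P) :
      Finsupp.weight (Pi.single x 1 - Pi.single y 1 : P → ℤ) m = m x - m y := by
    have hsingle (z : P) : Finsupp.weight (Pi.single z 1 : P → ℤ) m = m z := by
      rw [Finsupp.weight_single_index, nsmul_one]
    rw [← hsingle x, ← hsingle y]
    simp only [Finsupp.weight_apply, Finsupp.sum, Pi.sub_apply, smul_sub, Finset.sum_sub_distrib]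
  simp only [hweight, sub_nonneg, Nat.cast_le, Antitone]

theorem mem_hibiRing_iff_weightValuation_nonneg [CommRing k] [IsDomain k] [Preorder P]
    [DecidableEq P] {f : MvPolynomial P k} :
    f ∈ hibiRing k P ↔
      ∀ x y, x ≤ y → 0 ≤ weightValuation (Pi.single x 1 - Pi.single y 1 : P → ℤ) f := by
  simp only [mem_hibiRing_iff, antitone_iff_weight_nonneg, ← WithTop.coe_zero,
    coe_le_weightValuation_iff]
  exact ⟨fun h x y hxy m hm => h m hm x y hxy, fun h m hm x y hxy => h x y hxy m hm⟩

instance isIntegrallyClosedIn_hibiRing [CommRing k] [IsDomain k] [Preorder P] :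
    IsIntegrallyClosedIn (hibiRing k P) (MvPolynomial P k) := by
  classical
  refine Subring.isIntegrallyClosedIn_iff.mpr fun {f} hf => ?_
  refine mem_hibiRing_iff_weightValuation_nonneg.mpr fun x y hxy => ?_
  exact addValuation_nonneg_of_isIntegral _
    (fun a => mem_hibiRing_iff_weightValuation_nonneg.mp a.2 x y hxy) hf

theorem hibi_ring_is_normal_domain_general (k P : Type*) [CommRing k] [IsDomain k]
    [IsIntegrallyClosed k] [Preorder P] :
    IsDomain (hibiRing k P) ∧ IsIntegrallyClosed (hibiRing k P) :=
  ⟨inferInstance, .of_isIntegrallyClosed_of_isIntegrallyClosedIn _ (MvPolynomial P k)⟩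

end Normality

/-- the Hibi ring is a normal domain. -/
theorem hibi_ring_is_normal_domain
    {k : Type*} [Field k] {P : Type*} [Fintype P] [PartialOrder P]
    (x₀ : P) (hx₀ : ∀ x : P, x₀ ≤ x)
    (H : Subalgebra k (MvPolynomial P k))
    (hH : H = Algebra.adjoin k
      {f : MvPolynomial P k | ∃ I : Finset P, I.Nonempty ∧ IsLowerSet (I : Set P) ∧
        f = ∏ x ∈ I, X x}) :
    IsDomain H ∧ IsIntegrallyClosed H := by
  subst hH
  exact hibi_ring_is_normal_domain_general k P
end

section
/- Let P be a finite poset with unique minimal element x₀ and let ν be a minimal element of the poset (T(P), ≤). Then there exists a sequence y₁, x₁, …, y_t, x_t of elements of P, with the convention y_{t+1} = ∞, such that: (1) the sequence satisfies condition N; (2) ν(x_i) − ν(y_{i+1}) = rank[x_i, y_{i+1}] for all 0 ≤ i ≤ t; and (3) for every 1 ≤ i ≤ t, rank[x_i,z] + rank[z,y_{i+1}] < rank[x_i,y_{i+1}] for all z with x_i < z ≤ y_i and x_i < z ≤ y_{i+1}, and rank[x_{i−1},z] + rank[z,y_i] < rank[x_{i−1},y_i] for all z with x_{i−1} ≤ z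 < y_i and x_i ≤ z < y_i. -/
/-- The rank of the interval `[x,y]`: the maximum length of a chain from `x` to `y`. -/
noncomputable def intervalRank {Q : Type*} [PartialOrder Q] (x y : Q) : ℕ :=
  sSup {n : ℕ | ∃ c : Fin (n + 1) → Q, StrictMono c ∧ c 0 = x ∧ c (Fin.last n) = y}

/-- `ν ∈ T(P)`: here `Q` plays the role of `P⁺`, with `⊤ = ∞`. -/
def IsTP {Q : Type*} [PartialOrder Q] [OrderTop Q] (ν : Q → ℕ) : Prop :=
  ν ⊤ = 0 ∧ StrictAnti ν

/-- The order on `T(P)`: `μ ≤ ν` iff `ν - μ ∈ \overline{T}(P)`, i.e. `ν - μ` is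
nonnegative and order-reversing. -/
def LeTP {Q : Type*} [PartialOrder Q] (μ ν : Q → ℕ) : Prop :=
  (∀ a : Q, μ a ≤ ν a) ∧
  (∀ a b : Q, a ≤ b → (ν b : ℤ) - (μ b : ℤ) ≤ (ν a : ℤ) - (μ a : ℤ))

/-- `ν` is a minimal element of the poset `(T(P), ≤)`. -/
def IsMinTP {Q : Type*} [PartialOrder Q] [OrderTop Q] (ν : Q → ℕ) : Prop :=
  IsTP ν ∧ ∀ μ : Q → ℕ, IsTP μ → LeTP μ ν → μ = ν

/-- Condition N (elements of the sequence lie in `P = Q ∖ {⊤}`, `x₀ = ⊥`). -/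
def CondN {Q : Type*} [PartialOrder Q] [OrderBot Q] (t : ℕ) (y x : Fin t → Q) : Prop :=
  (∀ h : 0 < t, x ⟨0, h⟩ ≠ ⊥) ∧
  (∀ i : Fin t, x i < y i) ∧
  (∀ (i : ℕ) (h₁ : i < t) (h₂ : i + 1 < t), x ⟨i, h₁⟩ < y ⟨i + 1, h₂⟩) ∧
  (∀ i j : Fin t, i < j → ¬ x j ≤ y i)

/-- `x_0 = x₀, x_1, …, x_t`: the sequence of `x`'s prefixed with the minimum. -/
def seqX {Q : Type*} (x₀ : Q) {t : ℕ} (x : Fin t → Q) : Fin (t + 1) → Q :=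
  Fin.cons x₀ x

/-- `y_1, …, y_t, y_{t+1} = ∞`: the sequence of `y`'s suffixed with `∞`. -/
def seqY {Q : Type*} (inf : Q) {t : ℕ} (y : Fin t → Q) : Fin (t + 1) → Q :=
  Fin.snoc y inf

/-!
A step `u ≤ v` is tight when `ν u - ν v` equals `rank[u, v]`. Walk from `x₀` by tight ascents, each
costing its rank, and free descents. The elements so reachable form a lower set closed under the
steps at which `ν` drops by one, so if `∞` were not among them then lowering `ν` by one on all of
them would give a smaller element of `T(P)`. Hence a minimal `ν` admits a walk to `∞`. The turning
points of a cheapest walk are the required sequence: a failure of condition N or of condition (3)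
would provide a shortcut.
-/

section IntervalRank

variable {Q : Type*} [PartialOrder Q] {ν : Q → ℕ} {u v w : Q}

lemma add_length_le_of_strictAnti (hν : StrictAnti ν) (p : LTSeries Q) :
    ν p.last + p.length ≤ ν p.head := by
  have hmono : StrictMono fun q => -(ν q : ℤ) := fun a b hab => by
    have := hν hab
    dsimp only
    lia
  have := (p.map _ hmono).head_add_length_le_int
  simp only [LTSeries.head_map, LTSeries.last_map, LTSeries.map_length] at this
  lia

lemma bddAbove_chain_lengths (hν : StrictAnti ν) (u v : Q) :
    BddAbove {n : ℕ | ∃ c : Fin (n + 1) → Q, StrictMono c ∧ c 0 = u ∧ c (Fin.last n) = v} := by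
  refine ⟨ν u, ?_⟩
  rintro n ⟨c, hc, rfl, rfl⟩
  exact le_of_add_le_right (add_length_le_of_strictAnti hν (LTSeries.mk n c hc))

lemma length_le_intervalRank (hν : StrictAnti ν) (p : LTSeries Q) :
    p.length ≤ intervalRank p.head p.last :=
  le_csSup (bddAbove_chain_lengths hν _ _) ⟨p, p.strictMono, rfl, rfl⟩

lemma exists_ltSeries_of_lt (h : u < v) :
    ∃ p : LTSeries Q, p.head = u ∧ p.last = v ∧ p.length = 1 :=
  ⟨LTSeries.mk 1 ![u, v] (by simpa [Fin.strictMono_iff_lt_succ] using h), rfl, rfl, rfl⟩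

lemma exists_ltSeries_length_eq_intervalRank (hν : StrictAnti ν) (h : u ≤ v) :
    ∃ p : LTSeries Q, p.head = u ∧ p.last = v ∧ p.length = intervalRank u v := by
  have hne : {n : ℕ | ∃ c : Fin (n + 1) → Q,
      StrictMono c ∧ c 0 = u ∧ c (Fin.last n) = v}.Nonempty := by
    obtain rfl | hlt := h.eq_or_lt
    · exact ⟨0, fun _ => u, fun i j hij => absurd hij (by lia), rfl, rfl⟩
    · obtain ⟨p, hu, hv, -⟩ := exists_ltSeries_of_lt hlt
      exact ⟨p.length, p, p.strictMono, hu, hv⟩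
  obtain ⟨c, hc, hu, hv⟩ := Nat.sSup_mem hne (bddAbove_chain_lengths hν u v)
  exact ⟨LTSeries.mk _ c hc, hu, hv, rfl⟩

lemma add_intervalRank_le (hν : StrictAnti ν) (h : u ≤ v) : ν v + intervalRank u v ≤ ν u := by
  obtain ⟨p, rfl, rfl, hp⟩ := exists_ltSeries_length_eq_intervalRank hν h
  exact hp ▸ add_length_le_of_strictAnti hν p

lemma intervalRank_add_le (hν : StrictAnti ν) (huv : u ≤ v) (hvw : v ≤ w) :
    intervalRank u v + intervalRank v w ≤ intervalRank u w := by
  obtain ⟨p, rfl, hpv, hp⟩ := exists_ltSeries_length_eq_intervalRank hν huv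
  obtain ⟨q, hqv, rfl, hq⟩ := exists_ltSeries_length_eq_intervalRank hν hvw
  simpa [hp, hq] using length_le_intervalRank hν (p.smash q (hpv.trans hqv.symm))

lemma intervalRank_pos (hν : StrictAnti ν) (h : u < v) : 0 < intervalRank u v := by
  obtain ⟨p, rfl, rfl, hp⟩ := exists_ltSeries_of_lt h
  exact Nat.lt_of_lt_of_le (hp ▸ one_pos) (length_le_intervalRank hν p)

end IntervalRank

/-- The step `u ≤ v` is tight for `ν`: the drop of `ν` along it, which for strictly decreasing `ν`
is at least `rank[u, v]`, is equal to it. -/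
structure IsTight {Q : Type*} [PartialOrder Q] (ν : Q → ℕ) (u v : Q) : Prop where
  le : u ≤ v
  eq_add : ν u = ν v + intervalRank u v

namespace IsTight

variable {Q : Type*} [PartialOrder Q] {ν : Q → ℕ} {u v w : Q}

lemma refl (hν : StrictAnti ν) (u : Q) : IsTight ν u u :=
  ⟨le_rfl, by have := add_intervalRank_le hν (le_refl u); lia⟩

lemma of_lt_of_eq_add_one (hν : StrictAnti ν) (h : u < v) (hval : ν u = ν v + 1) :
    IsTight ν u v :=
  ⟨h.le, by have := add_intervalRank_le hν h.le; have := intervalRank_pos hν h; lia⟩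

lemma intervalRank_add (hν : StrictAnti ν) (huv : IsTight ν u v) (hvw : IsTight ν v w) :
    intervalRank u v + intervalRank v w = intervalRank u w := by
  have := intervalRank_add_le hν huv.le hvw.le
  have := add_intervalRank_le hν (huv.le.trans hvw.le)
  have := huv.eq_add
  have := hvw.eq_add
  lia

lemma trans (hν : StrictAnti ν) (huv : IsTight ν u v) (hvw : IsTight ν v w) : IsTight ν u w :=
  ⟨huv.le.trans hvw.le, by
    rw [huv.eq_add, hvw.eq_add, ← huv.intervalRank_add hν hvw, Nat.add_right_comm, Nat.add_assoc]⟩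

lemma split (hν : StrictAnti ν) (huw : IsTight ν u w) (huv : u ≤ v) (hvw : v ≤ w)
    (hr : intervalRank u w ≤ intervalRank u v + intervalRank v w) :
    IsTight ν u v ∧ IsTight ν v w := by
  have := huw.eq_add
  have := add_intervalRank_le hν huv
  have := add_intervalRank_le hν hvw
  exact ⟨⟨huv, by lia⟩, ⟨hvw, by lia⟩⟩

end IsTight

lemma IsMinTP.top_mem_of_isLowerSet {Q : Type*} [PartialOrder Q] [OrderTop Q] {ν : Q → ℕ}
    (hν : IsMinTP ν) {S : Set Q} (hS : IsLowerSet S) (hne : S.Nonempty)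
    (hstep : ∀ u ∈ S, ∀ v, u < v → ν u = ν v + 1 → v ∈ S) : ⊤ ∈ S := by
  classical
  by_contra htop
  obtain ⟨⟨hν_top, hanti⟩, hmin⟩ := hν
  have hpos : ∀ v ∈ S, 0 < ν v := fun v hv =>
    pos_of_gt (hanti (lt_top_iff_ne_top.mpr (ne_of_mem_of_not_mem hv htop)))
  let μ : Q → ℕ := fun v => if v ∈ S then ν v - 1 else ν v
  have hμ : IsTP μ := by
    refine ⟨by simp [μ, htop, hν_top], fun u v huv => ?_⟩
    have := hanti huv
    grind [hS huv.le]
  have hle : LeTP μ ν := ⟨by grind, fun u v huv => by grind [hS huv]⟩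
  obtain ⟨v, hv⟩ := hne
  have : ν v - 1 = ν v := by simpa [μ, hv] using congrFun (hmin μ hμ hle) v
  grind

section Zigzag

variable {Q : Type*} [PartialOrder Q] [OrderBot Q] {ν : Q → ℕ} {n : ℕ} {u v w z : Q}

/-- `ZigzagReach ν n v`: a walk of total cost `n` leads from `⊥` to `v`, where a tight ascent costs
its rank and a descent is free. -/
inductive ZigzagReach (ν : Q → ℕ) : ℕ → Q → Prop
  | bot : ZigzagReach ν 0 ⊥
  | down {n : ℕ} {u v : Q} : ZigzagReach ν n v → u ≤ v → ZigzagReach ν n u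
  | up {n : ℕ} {u v : Q} :
      ZigzagReach ν n u → IsTight ν u v → ZigzagReach ν (n + intervalRank u v) v

/-- The least cost of a walk from `⊥` to `v` in the sense of `ZigzagReach`; the junk value `0` if
there is no such walk. -/
noncomputable def zigzagDist (ν : Q → ℕ) (v : Q) : ℕ :=
  sInf {n | ZigzagReach ν n v}

lemma zigzagDist_le (h : ZigzagReach ν n v) : zigzagDist ν v ≤ n :=
  Nat.sInf_le h

lemma zigzagReach_zigzagDist (h : ZigzagReach ν n v) : ZigzagReach ν (zigzagDist ν v) v :=
  Nat.sInf_mem (s := {n | ZigzagReach ν n v}) ⟨n, h⟩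

lemma zigzagDist_le_of_le (hv : ZigzagReach ν n v) (h : u ≤ v) :
    zigzagDist ν u ≤ zigzagDist ν v :=
  zigzagDist_le ((zigzagReach_zigzagDist hv).down h)

lemma zigzagDist_le_add_intervalRank (hu : ZigzagReach ν n u) (h : IsTight ν u v) :
    zigzagDist ν v ≤ zigzagDist ν u + intervalRank u v :=
  zigzagDist_le ((zigzagReach_zigzagDist hu).up h)

/-- A tight ascent from `u` to `v` that a cheapest walk from `⊥` to `v` can end with. -/
structure IsGeodesic (ν : Q → ℕ) (u v : Q) : Prop extends IsTight ν u v where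
  dist_eq : zigzagDist ν v = zigzagDist ν u + intervalRank u v

namespace IsGeodesic

lemma refl (hν : StrictAnti ν) (u : Q) : IsGeodesic ν u u :=
  ⟨.refl hν u, by have := (IsTight.refl hν u).eq_add; lia⟩

lemma trans (hν : StrictAnti ν) (huv : IsGeodesic ν u v) (hvw : IsGeodesic ν v w) :
    IsGeodesic ν u w :=
  ⟨huv.toIsTight.trans hν hvw.toIsTight, by
    rw [hvw.dist_eq, huv.dist_eq, ← huv.toIsTight.intervalRank_add hν hvw.toIsTight,
      Nat.add_assoc]⟩

lemma zigzagDist_lt (hν : StrictAnti ν) (h : IsGeodesic ν u v) (huv : u < v) :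
    zigzagDist ν u < zigzagDist ν v := by
  have := h.dist_eq
  have := intervalRank_pos hν huv
  lia

lemma intervalRank_add_lt_of_zigzagDist_le_left (hν : StrictAnti ν) (h : IsGeodesic ν u v)
    (hv : ZigzagReach ν n v) (huz : u < z) (hzv : z ≤ v) (hd : zigzagDist ν z ≤ zigzagDist ν u) :
    intervalRank u z + intervalRank z v < intervalRank u v := by
  by_contra! hr
  obtain ⟨huz', hzv'⟩ := h.toIsTight.split hν huz.le hzv hr
  have := zigzagDist_le_add_intervalRank (hv.down hzv) hzv'
  have := huz'.intervalRank_add hν hzv'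
  have := intervalRank_pos hν huz
  have := h.dist_eq
  lia

lemma intervalRank_add_lt_of_zigzagDist_le_right (hν : StrictAnti ν) (h : IsGeodesic ν u v)
    (hv : ZigzagReach ν n v) (huz : u ≤ z) (hzv : z < v) (hd : zigzagDist ν v ≤ zigzagDist ν z) :
    intervalRank u z + intervalRank z v < intervalRank u v := by
  by_contra! hr
  obtain ⟨huz', hzv'⟩ := h.toIsTight.split hν huz hzv.le hr
  have := zigzagDist_le_add_intervalRank (hv.down h.le) huz'
  have := huz'.intervalRank_add hν hzv'
  have := intervalRank_pos hν hzv
  have := h.dist_eq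
  lia

end IsGeodesic

/-- The turning points `⊥ = X 0 ≤ Y 0 > X 1 < Y 1 > ⋯ > X t < Y t` of a cheapest walk from `⊥` to
`Y t`. Only the values at indices up to `t` matter, and `X i`, `Y i` are `x_i`, `y_{i+1}` in the
notation of the theorem. The first ascent may be trivial, so that `t = 0` covers the walk to `⊥`. -/
structure IsGeodesicZigzag (ν : Q → ℕ) (t : ℕ) (X Y : ℕ → Q) : Prop where
  zero : X 0 = ⊥
  isGeodesic : ∀ i ≤ t, IsGeodesic ν (X i) (Y i)
  lt_prev : ∀ i < t, X (i + 1) < Y i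
  lt_next : ∀ i < t, X (i + 1) < Y (i + 1)
  dist_eq : ∀ i < t, zigzagDist ν (X (i + 1)) = zigzagDist ν (Y i)

namespace IsGeodesicZigzag

variable {t i j : ℕ} {X Y : ℕ → Q}

lemma exists_zigzagReach (hZ : IsGeodesicZigzag ν t X Y) (hi : i ≤ t) :
    ∃ n, ZigzagReach ν n (Y i) := by
  induction i with
  | zero => exact ⟨_, .up .bot (hZ.zero ▸ (hZ.isGeodesic 0 hi).toIsTight)⟩
  | succ i ih =>
    obtain ⟨n, hn⟩ := ih (by lia)
    exact ⟨_, (hn.down (hZ.lt_prev i hi).le).up (hZ.isGeodesic (i + 1) hi).toIsTight⟩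

lemma strictMonoOn_zigzagDist (hν : StrictAnti ν) (hZ : IsGeodesicZigzag ν t X Y) :
    StrictMonoOn (fun i => zigzagDist ν (Y i)) (Set.Iic t) :=
  strictMonoOn_of_lt_add_one Set.ordConnected_Iic fun i _ _ hi =>
    hZ.dist_eq i hi ▸ (hZ.isGeodesic (i + 1) hi).zigzagDist_lt hν (hZ.lt_next i hi)

lemma not_le (hν : StrictAnti ν) (hZ : IsGeodesicZigzag ν t X Y) (hij : i < j) (hj : j < t) :
    ¬ X (j + 1) ≤ Y i := fun hle => by
  obtain ⟨n, hn⟩ := hZ.exists_zigzagReach (hij.trans hj).le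
  have hlt : zigzagDist ν (Y i) < zigzagDist ν (Y j) :=
    hZ.strictMonoOn_zigzagDist hν (hij.trans hj).le hj.le hij
  exact (zigzagDist_le_of_le hn hle).not_gt (hZ.dist_eq j hj ▸ hlt)

lemma one_ne_bot (hν : StrictAnti ν) (hZ : IsGeodesicZigzag ν t X Y) (ht : 0 < t) : X 1 ≠ ⊥ := by
  intro hbot
  have hlt : X 0 < Y 0 := hZ.zero.trans_lt (hbot ▸ hZ.lt_prev 0 ht)
  have hd := (hZ.isGeodesic 0 ht.le).zigzagDist_lt hν hlt
  rw [← hZ.dist_eq 0 ht, zero_add, hbot, hZ.zero] at hd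
  exact hd.false

lemma condN (hν : StrictAnti ν) (hZ : IsGeodesicZigzag ν t X Y) :
    CondN t (fun i => Y i) (fun i => X (i + 1)) :=
  ⟨fun ht => hZ.one_ne_bot hν ht, fun i => hZ.lt_prev i i.2,
    fun i hi _ => hZ.lt_next i hi, fun _ j hij => hZ.not_le hν hij j.2⟩

lemma intervalRank_add_lt_next (hν : StrictAnti ν) (hZ : IsGeodesicZigzag ν t X Y) (hi : i < t)
    (hxz : X (i + 1) < z) (hzi : z ≤ Y i) (hz : z ≤ Y (i + 1)) :
    intervalRank (X (i + 1)) z + intervalRank z (Y (i + 1)) <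
      intervalRank (X (i + 1)) (Y (i + 1)) := by
  obtain ⟨m, hm⟩ := hZ.exists_zigzagReach hi.le
  obtain ⟨n, hn⟩ := hZ.exists_zigzagReach hi
  exact (hZ.isGeodesic (i + 1) hi).intervalRank_add_lt_of_zigzagDist_le_left hν hn hxz hz
    (hZ.dist_eq i hi ▸ zigzagDist_le_of_le hm hzi)

lemma intervalRank_add_lt_prev (hν : StrictAnti ν) (hZ : IsGeodesicZigzag ν t X Y) (hi : i < t)
    (hxz : X i ≤ z) (hz : X (i + 1) ≤ z) (hzi : z < Y i) :
    intervalRank (X i) z + intervalRank z (Y i) < intervalRank (X i) (Y i) := by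
  obtain ⟨n, hn⟩ := hZ.exists_zigzagReach hi.le
  exact (hZ.isGeodesic i hi.le).intervalRank_add_lt_of_zigzagDist_le_right hν hn hxz hzi
    (hZ.dist_eq i hi ▸ zigzagDist_le_of_le (hn.down hzi.le) hz)

lemma of_bot (hν : StrictAnti ν) : IsGeodesicZigzag ν 0 (fun _ => ⊥) (fun _ => ⊥) where
  zero := rfl
  isGeodesic _ _ := .refl hν ⊥
  lt_prev _ h := absurd h (Nat.not_lt_zero _)
  lt_next _ h := absurd h (Nat.not_lt_zero _)
  dist_eq _ h := absurd h (Nat.not_lt_zero _)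

lemma update_last (hν : StrictAnti ν) (hZ : IsGeodesicZigzag ν t X Y) (h : IsGeodesic ν (Y t) v) :
    IsGeodesicZigzag ν t X (Function.update Y t v) where
  zero := hZ.zero
  isGeodesic i hi := by
    obtain rfl | hne := eq_or_ne i t
    · simpa using (hZ.isGeodesic i hi).trans hν h
    · simpa [hne] using hZ.isGeodesic i hi
  lt_prev i hi := by simpa [hi.ne] using hZ.lt_prev i hi
  lt_next i hi := by
    obtain rfl | hne := eq_or_ne (i + 1) t
    · simpa using (hZ.lt_next i hi).trans_le h.le
    · simpa [hne] using hZ.lt_next i hi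
  dist_eq i hi := by simpa [hi.ne] using hZ.dist_eq i hi

lemma append (hZ : IsGeodesicZigzag ν t X Y) (hu : u < Y t)
    (hd : zigzagDist ν u = zigzagDist ν (Y t)) (huv : u < v) (h : IsGeodesic ν u v) :
    IsGeodesicZigzag ν (t + 1) (Function.update X (t + 1) u) (Function.update Y (t + 1) v) where
  zero := by simpa using hZ.zero
  isGeodesic i hi := by
    obtain rfl | hlt := hi.eq_or_lt
    · simpa using h
    · simpa [hlt.ne] using hZ.isGeodesic i (Nat.lt_succ_iff.mp hlt)
  lt_prev i hi := by
    obtain rfl | hlt := Nat.lt_succ_iff_lt_or_eq.mp hi |>.symm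
    · simpa using hu
    · simpa [hlt.ne, hi.ne] using hZ.lt_prev i hlt
  lt_next i hi := by
    obtain rfl | hlt := Nat.lt_succ_iff_lt_or_eq.mp hi |>.symm
    · simpa using huv
    · simpa [hlt.ne] using hZ.lt_next i hlt
  dist_eq i hi := by
    obtain rfl | hlt := Nat.lt_succ_iff_lt_or_eq.mp hi |>.symm
    · simpa using hd
    · simpa [hlt.ne, hi.ne] using hZ.dist_eq i hlt

end IsGeodesicZigzag

/- For an arbitrary `v` only an element above `v` at the same distance can be a turning point, since
a cheapest walk to `v` may end with a descent. -/
lemma exists_geodesicZigzag_of_eq_zigzagDist (hν : StrictAnti ν) (h : ZigzagReach ν n v)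
    (hn : n = zigzagDist ν v) :
    ∃ t X Y, IsGeodesicZigzag ν t X Y ∧ v ≤ Y t ∧ zigzagDist ν (Y t) = zigzagDist ν v := by
  induction h with
  | bot => exact ⟨0, _, _, .of_bot hν, le_rfl, rfl⟩
  | @down n u v hv huv ih =>
    have hd : zigzagDist ν v = zigzagDist ν u :=
      (hn ▸ zigzagDist_le hv).antisymm (zigzagDist_le_of_le hv huv)
    obtain ⟨t, X, Y, hZ, hvY, hY⟩ := ih (hn.trans hd.symm)
    exact ⟨t, X, Y, hZ, huv.trans hvY, hY.trans hd⟩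
  | @up n u v hu huv ih =>
    have hle := zigzagDist_le_add_intervalRank hu huv
    have hdu : n = zigzagDist ν u := by have := zigzagDist_le hu; lia
    have hgeo : IsGeodesic ν u v := ⟨huv, by lia⟩
    obtain ⟨t, X, Y, hZ, huY, hY⟩ := ih hdu
    obtain rfl | hltY := huY.eq_or_lt
    · exact ⟨t, _, _, hZ.update_last hν hgeo, by simp⟩
    obtain rfl | hlt := huv.le.eq_or_lt
    · exact ⟨t, X, Y, hZ, huY, hY⟩
    · exact ⟨t + 1, _, _, hZ.append hltY hY.symm hlt hgeo, by simp⟩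

end Zigzag

section Sequences

variable {Q : Type*} {t : ℕ}

lemma seqX_shift (X : ℕ → Q) (i : Fin (t + 1)) :
    seqX (X 0) (fun j : Fin t => X (j + 1)) i = X i := by
  cases i using Fin.cases <;> simp [seqX]

lemma seqY_restrict (Y : ℕ → Q) (i : Fin (t + 1)) :
    seqY (Y t) (fun j : Fin t => Y j) i = Y i := by
  cases i using Fin.lastCases <;> simp [seqY]

end Sequences

section Minimal

variable {Q : Type*} [PartialOrder Q] [BoundedOrder Q] {ν : Q → ℕ}

lemma IsMinTP.exists_zigzagReach_top (hν : IsMinTP ν) : ∃ n, ZigzagReach ν n ⊤ := by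
  refine hν.top_mem_of_isLowerSet (S := {v | ∃ n, ZigzagReach ν n v}) ?_ ⟨⊥, 0, .bot⟩ ?_
  · rintro v u huv ⟨n, hn⟩
    exact ⟨n, hn.down huv⟩
  · rintro u ⟨n, hn⟩ v huv hval
    exact ⟨_, hn.up (.of_lt_of_eq_add_one hν.1.2 huv hval)⟩

lemma IsMinTP.exists_geodesicZigzag_top (hν : IsMinTP ν) :
    ∃ t X Y, IsGeodesicZigzag ν t X Y ∧ Y t = ⊤ := by
  obtain ⟨n, hn⟩ := hν.exists_zigzagReach_top
  obtain ⟨t, X, Y, hZ, hY, -⟩ :=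
    exists_geodesicZigzag_of_eq_zigzagDist hν.1.2 (zigzagReach_zigzagDist hn) rfl
  exact ⟨t, X, Y, hZ, top_le_iff.mp hY⟩

end Minimal

theorem minimal_TP_sequence_exists_general
    {Q : Type*} [PartialOrder Q] [BoundedOrder Q]
    (ν : Q → ℕ) (hν : IsMinTP ν) :
    ∃ (t : ℕ) (y x : Fin t → Q),
      (∀ i, y i ≠ ⊤) ∧ (∀ i, x i ≠ ⊤) ∧
      CondN t y x ∧
      (∀ i : Fin (t + 1),
        (ν (seqX ⊥ x i) : ℤ) - (ν (seqY ⊤ y i) : ℤ) =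
          intervalRank (seqX ⊥ x i) (seqY ⊤ y i)) ∧
      (∀ i : Fin t,
        (∀ z : Q, x i < z → z ≤ y i → z ≤ seqY ⊤ y i.succ →
          intervalRank (x i) z + intervalRank z (seqY ⊤ y i.succ) <
            intervalRank (x i) (seqY ⊤ y i.succ)) ∧
        (∀ z : Q, seqX ⊥ x i.castSucc ≤ z → x i ≤ z → z < y i →
          intervalRank (seqX ⊥ x i.castSucc) z + intervalRank z (y i) <
            intervalRank (seqX ⊥ x i.castSucc) (y i))) := by
  have hanti := hν.1.2
  obtain ⟨t, X, Y, hZ, hY⟩ := hν.exists_geodesicZigzag_top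
  have hx : ∀ i : Fin (t + 1), seqX ⊥ (fun j : Fin t => X (j + 1)) i = X i :=
    hZ.zero ▸ seqX_shift X
  have hy : ∀ i : Fin (t + 1), seqY ⊤ (fun j : Fin t => Y j) i = Y i :=
    hY ▸ seqY_restrict Y
  refine ⟨t, fun i => Y i, fun i => X (i + 1), fun i hi => ?_,
    fun i => (hZ.lt_prev i i.2).ne_top, hZ.condN hanti, fun i => ?_, fun i => ?_⟩
  · have hlt := hZ.strictMonoOn_zigzagDist hanti i.2.le Set.self_mem_Iic i.2
    simp [hi, hY] at hlt
  · rw [hx, hy, (hZ.isGeodesic i i.is_le).eq_add, Nat.cast_add, add_sub_cancel_left]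
  · simp only [hx, hy, Fin.val_succ, Fin.val_castSucc]
    exact ⟨fun _ => hZ.intervalRank_add_lt_next hanti i.2,
      fun _ => hZ.intervalRank_add_lt_prev hanti i.2⟩

/-- a minimal element `ν` of `T(P)` admits a sequence with condition N
realizing the ranks, and with no "retracing" (condition (3)).  Here for `i : Fin (t+1)`,
`seqX ⊥ x i` is `x_i` (with `x_0 = x₀ = ⊥`) and `seqY ⊤ y i` is `y_{i+1}`
(with `y_{t+1} = ∞ = ⊤`). -/
theorem minimal_TP_sequence_exists
    {Q : Type*} [Fintype Q] [PartialOrder Q] [BoundedOrder Q]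
    (ν : Q → ℕ) (hν : IsMinTP ν) :
    ∃ (t : ℕ) (y x : Fin t → Q),
      (∀ i, y i ≠ ⊤) ∧ (∀ i, x i ≠ ⊤) ∧
      CondN t y x ∧
      (∀ i : Fin (t + 1),
        (ν (seqX ⊥ x i) : ℤ) - (ν (seqY ⊤ y i) : ℤ) =
          intervalRank (seqX ⊥ x i) (seqY ⊤ y i)) ∧
      (∀ i : Fin t,
        (∀ z : Q, x i < z → z ≤ y i → z ≤ seqY ⊤ y i.succ →
          intervalRank (x i) z + intervalRank z (seqY ⊤ y i.succ) <
            intervalRank (x i) (seqY ⊤ y i.succ)) ∧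
        (∀ z : Q, seqX ⊥ x i.castSucc ≤ z → x i ≤ z → z < y i →
          intervalRank (seqX ⊥ x i.castSucc) z + intervalRank z (y i) <
            intervalRank (seqX ⊥ x i.castSucc) (y i))) :=
  minimal_TP_sequence_exists_general ν hν
end

section
/- Let P be a finite poset with unique minimal element x₀, let ν ∈ T(P), and let y₁, x₁, …, y_t, x_t be a sequence of elements of P satisfying condition N such that ν(x_i) − ν(y_{i+1}) = rank[x_i, y_{i+1}] for all 0 ≤ i ≤ t (with y_{t+1} = ∞). Then ν(x₀) ≤ r(y₁, x₁, …, y_t, x_t). -/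
/-- The integer `r(y₁,x₁,…,y_t,x_t)` attached to a sequence with condition N. -/
noncomputable def rSeq {Q : Type*} [PartialOrder Q] [BoundedOrder Q] (t : ℕ)
    (y x : Fin t → Q) : ℤ :=
  (∑ i : Fin t,
    ((intervalRank (seqX (⊥ : Q) x i.castSucc) (y i) : ℤ) -
      (intervalRank (x i) (y i) : ℤ))) +
  (intervalRank (seqX (⊥ : Q) x (Fin.last t)) (⊤ : Q) : ℤ)

/-!
Let `ν` be strictly antitone with integer values. Along a chain from `a` to `b` it drops by at least
one at every step, so `rank [a, b] ≤ ν a - ν b`; in particular chains in an interval have bounded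
length even if the poset is infinite. Now follow `ν` along the zigzag
`x₀ ≤ y₁ ≥ x₁ ≤ y₂ ≥ ⋯ ≥ x_t ≤ ∞`: the signed drops along its legs add up to `ν x₀ - ν ∞`. An
ascending leg contributes at most its rank, by assumption, and a descending leg contributes at most
minus its rank, so the total is at most `r(y₁, x₁, …, y_t, x_t)`.
-/

theorem natCast_le_sub_of_strictMono_of_strictAnti {Q : Type*} [Preorder Q] {ν : Q → ℤ}
    (hν : StrictAnti ν) {n : ℕ} {c : Fin (n + 1) → Q} (hc : StrictMono c) :
    (n : ℤ) ≤ ν (c 0) - ν (c (Fin.last n)) := by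
  have h : -ν (c 0) + n ≤ -ν (c (Fin.last n)) :=
    (LTSeries.mk n (fun i ↦ -ν (c i)) (hν.comp_strictMono hc).neg).head_add_length_le_int
  linarith

theorem intervalRank_le_sub_of_strictAnti {Q : Type*} [PartialOrder Q] {ν : Q → ℤ}
    (hν : StrictAnti ν) {a b : Q} (hab : a ≤ b) : (intervalRank a b : ℤ) ≤ ν a - ν b := by
  have hdrop : 0 ≤ ν a - ν b := sub_nonneg.2 (hν.antitone hab)
  rw [← Int.le_toNat hdrop]
  refine csSup_le' ?_
  rintro n ⟨c, hc, rfl, rfl⟩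
  exact (Int.le_toNat hdrop).2 (natCast_le_sub_of_strictMono_of_strictAnti hν hc)

theorem sum_castSucc_sub_succ {G : Type*} [AddCommGroup G] {n : ℕ} (f : Fin (n + 1) → G) :
    ∑ i : Fin n, (f i.castSucc - f i.succ) = f 0 - f (Fin.last n) := by
  rw [Finset.sum_sub_distrib, sub_eq_sub_iff_add_eq_add, ← Fin.sum_univ_castSucc,
    Fin.sum_univ_succ]

theorem sum_zigzag_sub {Q G : Type*} [AddCommGroup G] (f : Q → G) (a b : Q) {t : ℕ}
    (y x : Fin t → Q) :
    ∑ i, ((f (seqX a x i.castSucc) - f (y i)) - (f (x i) - f (y i))) +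
      (f (seqX a x (Fin.last t)) - f b) = f a - f b := by
  have htelescope :
      ∑ i, (f (seqX a x i.castSucc) - f (x i)) = f a - f (seqX a x (Fin.last t)) :=
    sum_castSucc_sub_succ (f ∘ seqX a x)
  simp only [sub_sub_sub_cancel_right, htelescope, sub_add_sub_cancel]

theorem nu_le_rSeq_general {Q : Type*} [PartialOrder Q] [BoundedOrder Q] {ν : Q → ℤ}
    (hν : StrictAnti ν) {t : ℕ} {y x : Fin t → Q} (hxy : ∀ i, x i ≤ y i)
    (hrk : ∀ i : Fin (t + 1),
      ν (seqX ⊥ x i) - ν (seqY ⊤ y i) ≤ intervalRank (seqX ⊥ x i) (seqY ⊤ y i)) :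
    ν ⊥ - ν ⊤ ≤ rSeq t y x := by
  have hascent (i : Fin t) :
      ν (seqX ⊥ x i.castSucc) - ν (y i) ≤ intervalRank (seqX ⊥ x i.castSucc) (y i) := by
    simpa only [seqY, Fin.snoc_castSucc] using hrk i.castSucc
  have hlast :
      ν (seqX ⊥ x (Fin.last t)) - ν ⊤ ≤ intervalRank (seqX ⊥ x (Fin.last t)) ⊤ := by
    simpa only [seqY, Fin.snoc_last] using hrk (Fin.last t)
  have hdescent (i : Fin t) : (intervalRank (x i) (y i) : ℤ) ≤ ν (x i) - ν (y i) :=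
    intervalRank_le_sub_of_strictAnti hν (hxy i)
  rw [← sum_zigzag_sub ν ⊥ ⊤ y x, rSeq]
  exact add_le_add (Finset.sum_le_sum fun i _ ↦ sub_le_sub (hascent i) (hdescent i)) hlast

/-- if `ν ∈ T(P)` and a sequence with condition N realizes the ranks,
then `ν(x₀) ≤ r(y₁,x₁,…,y_t,x_t)`. -/
theorem nu_le_rSeq
    {Q : Type*} [Fintype Q] [PartialOrder Q] [BoundedOrder Q]
    (ν : Q → ℕ) (hν : IsTP ν) (t : ℕ) (y x : Fin t → Q)
    (hy : ∀ i, y i ≠ ⊤) (hx : ∀ i, x i ≠ ⊤)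
    (hN : CondN t y x)
    (hrk : ∀ i : Fin (t + 1),
      (ν (seqX ⊥ x i) : ℤ) - (ν (seqY ⊤ y i) : ℤ) =
        intervalRank (seqX ⊥ x i) (seqY ⊤ y i)) :
    (ν (⊥ : Q) : ℤ) ≤ rSeq t y x := by
  have hanti : StrictAnti fun a ↦ (ν a : ℤ) := Nat.strictMono_cast.comp_strictAnti hν.2
  simpa [hν.1] using nu_le_rSeq_general hanti (fun i ↦ (hN.2.1 i).le) fun i ↦ (hrk i).le
end

section
/- Let P be a finite poset with unique minimal element x₀, let ν ∈ T(P), and let y₁, x₁, …, y_t, x_t be a sequence of elements of P satisfying the three conditions: (1) the sequence satisfies condition N; (2) ν(x_i) − ν(y_{i+1}) = rank[x_i,y_{i+1}] for 0 ≤ i ≤ t (with y_{t+1} = ∞); (3) for all 1 ≤ i ≤ t, rank[x_i,z] + rank[z,y_{i+1}] < rank[x_i,y_{i+1}] for all z with x_i < z ≤ y_i and x_i < z ≤ y_{i+1}, and rank[x_{i−1},z] + rank[z,y_i] < rank[x_{i−1},y_i] for all z with x_{i−1} ≤ z < y_i and x_i ≤ z < y_i. For 0 ≤ i ≤ t choose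 a saturated chain x_i = α_{i,0} ⋖ α_{i,1} ⋖ ⋯ ⋖ α_{i,u_i} = y_{i+1} with u_i = rank[x_i,y_{i+1}], and for 1 ≤ i ≤ t choose a saturated chain x_i = β_{i,0} ⋖ β_{i,1} ⋖ ⋯ ⋖ β_{i,v_i} = y_i with v_i = rank[x_i,y_i]. Then the elements α_{0,0}, …, α_{0,u₀}, β_{1,1}, …, β_{1,v₁−1}, α_{1,0}, …, α_{1,u₁}, β_{2,1}, …, β_{2,v₂−1}, …, α_{t−1,0}, …, α_{t−1,u_{t−1}}, β_{t,1}, …, β_{t,v_t−1}, α_{t,0}, …, α_{t,u_t} are pairwise distinct elements of P⁺. -/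
/-!
Call `z ∈ [x, y]` geodesic when `rank[x,z] + rank[z,y] = rank[x,y]`; every element of a longest
chain from `x` to `y` is geodesic. So it suffices to separate the geodesic elements of the
intervals `[x_i, y_{i+1}]` from each other and from the open intervals `(x_i, y_i)`. Condition N
says that `x_j ≤ y_{i+1}` forces `j ≤ i + 1`, so only neighbouring intervals can meet, and they can
meet only inside some `[x_i, y_i]`. Condition (3) removes from `[x_i, y_i]` everything but `x_i` for
the geodesic elements of `[x_i, y_{i+1}]`, and everything but `y_i` for those of `[x_{i-1}, y_i]`.
-/

section LongestChain

variable {Q : Type*} [Preorder Q]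

/-- `p` has the maximum length among all chains with the same first and last elements, of which
it need not be the only one. -/
def IsLongestChain (p : LTSeries Q) : Prop :=
  ∀ q : LTSeries Q, q.head = p.head → q.last = p.last → q.length ≤ p.length

namespace IsLongestChain

variable {p : LTSeries Q}

theorem take (hp : IsLongestChain p) (k : Fin (p.length + 1)) : IsLongestChain (p.take k) := by
  intro q hhead hlast
  have hconnect : q.last = (p.drop k).head := by
    rw [hlast, RelSeries.last_take, RelSeries.head_drop]
  have hle : q.length + (p.length - k) ≤ p.length :=
    hp (q.smash (p.drop k) hconnect) (by simpa using hhead) (by simp)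
  have hk : (k : ℕ) ≤ p.length := Fin.is_le k
  change q.length ≤ k
  omega

theorem drop (hp : IsLongestChain p) (k : Fin (p.length + 1)) : IsLongestChain (p.drop k) := by
  intro q hhead hlast
  have hconnect : (p.take k).last = q.head := by
    rw [hhead, RelSeries.last_take, RelSeries.head_drop]
  have hle : k + q.length ≤ p.length :=
    hp ((p.take k).smash q hconnect) (by simp) (by simpa using hlast)
  exact Nat.le_sub_of_add_le' hle

end IsLongestChain

end LongestChain

section GeodesicInterval

variable {Q : Type*} [PartialOrder Q]

namespace IsLongestChain

variable {p : LTSeries Q}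

theorem intervalRank_eq_length (hp : IsLongestChain p) : intervalRank p.head p.last = p.length := by
  refine IsGreatest.csSup_eq ⟨⟨p, p.strictMono, rfl, rfl⟩, ?_⟩
  rintro n ⟨c, hc, hhead, hlast⟩
  exact hp (LTSeries.mk n c hc) hhead hlast

theorem of_length_eq_intervalRank (h : p.length = intervalRank p.head p.last) :
    IsLongestChain p := by
  intro q hhead hlast
  by_cases hbdd : BddAbove {n : ℕ | ∃ c : Fin (n + 1) → Q,
      StrictMono c ∧ c 0 = p.head ∧ c (Fin.last n) = p.last}
  · exact h ▸ le_csSup hbdd ⟨q, q.strictMono, hhead, hlast⟩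
  · -- The supremum of an unbounded set is `0`, so `p` and hence `q` reduce to one point.
    have hp : p.length = 0 := h.trans (Nat.sSup_of_not_bddAbove hbdd)
    have hends : p.head = p.last := congrArg p (Fin.ext hp.symm)
    have hq : (0 : Fin (q.length + 1)) = Fin.last q.length :=
      q.strictMono.injective ((hhead.trans hends).trans hlast.symm)
    exact (congrArg Fin.val hq).symm.trans_le (Nat.zero_le _)

theorem intervalRank_add_intervalRank (hp : IsLongestChain p) (k : Fin (p.length + 1)) :
    intervalRank p.head (p k) + intervalRank (p k) p.last = intervalRank p.head p.last := by
  have htake : intervalRank p.head (p k) = k := by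
    simpa using (hp.take k).intervalRank_eq_length
  have hdrop : intervalRank (p k) p.last = p.length - k := by
    simpa using (hp.drop k).intervalRank_eq_length
  rw [htake, hdrop, hp.intervalRank_eq_length, Nat.add_sub_of_le (Fin.is_le k)]

end IsLongestChain

/-- The geodesic interval from `x` to `y` for the "distance" `intervalRank`: the elements of
`[x, y]` at which the rank is additive. When the rank of `[x, y]` is finite, these are the elements
of the chains of maximum length from `x` to `y`. -/
def geodesicInterval (x y : Q) : Set Q :=
  {z ∈ Set.Icc x y | intervalRank x z + intervalRank z y = intervalRank x y}

theorem geodesicInterval_subset_Icc (x y : Q) : geodesicInterval x y ⊆ Set.Icc x y :=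
  Set.sep_subset _ _

theorem disjoint_geodesicInterval {x y : Q} {s : Set Q}
    (h : ∀ z ∈ s, x ≤ z → z ≤ y → intervalRank x z + intervalRank z y ≠ intervalRank x y) :
    Disjoint (geodesicInterval x y) s :=
  Set.disjoint_left.mpr fun z hz hzs => h z hzs hz.1.1 hz.1.2 hz.2

theorem apply_mem_geodesicInterval {x y : Q} {n : ℕ} {c : Fin (n + 1) → Q} (hc : StrictMono c)
    (hhead : c 0 = x) (hlast : c (Fin.last n) = y) (hn : n = intervalRank x y)
    (k : Fin (n + 1)) : c k ∈ geodesicInterval x y := by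
  subst hhead hlast
  exact ⟨⟨hc.monotone (Fin.zero_le k), hc.monotone (Fin.le_last k)⟩,
    IsLongestChain.intervalRank_add_intervalRank (p := LTSeries.mk n c hc)
      (.of_length_eq_intervalRank hn) k⟩

end GeodesicInterval

section Zigzag

-- In the notation of condition N, `X i` is `x_i` and `Y i` is `y_{i+1}`.
variable {Q : Type*} [Preorder Q] {t : ℕ} {X Y : Fin (t + 1) → Q} {S : Fin (t + 1) → Set Q}

theorem pairwise_disjoint_of_subset_Icc
    (hXY : ∀ i j, X j ≤ Y i → (j : ℕ) ≤ i + 1)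
    (hlt : ∀ j : Fin t, X j.succ < Y j.castSucc)
    (hS : ∀ i, S i ⊆ Set.Icc (X i) (Y i))
    (hIoc : ∀ j : Fin t, Disjoint (S j.succ) (Set.Ioc (X j.succ) (Y j.castSucc)))
    (hIco : ∀ j : Fin t, Disjoint (S j.castSucc) (Set.Ico (X j.succ) (Y j.castSucc))) :
    Pairwise (Function.onFun Disjoint S) := by
  rw [pairwise_disjoint_on]
  refine fun i i' hii' => Set.disjoint_left.mpr fun z hz hz' => ?_
  have hi' : (i' : ℕ) ≤ i + 1 := hXY i i' ((hS i' hz').1.trans (hS i hz).2)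
  obtain ⟨j, rfl⟩ := Fin.exists_castSucc_eq.mpr (Fin.ne_last_of_lt hii')
  obtain rfl : i' = j.succ := Fin.ext (le_antisymm hi' hii')
  have hXz : X j.succ ≤ z := (hS _ hz').1
  have hzY : z ≤ Y j.castSucc := (hS _ hz).2
  have not_lt_Y : ¬ z < Y j.castSucc := fun h => Set.disjoint_left.mp (hIco j) hz ⟨hXz, h⟩
  have not_X_lt : ¬ X j.succ < z := fun h => Set.disjoint_left.mp (hIoc j) hz' ⟨h, hzY⟩
  have hYz : Y j.castSucc ≤ z := not_lt_iff_le_imp_ge.mp not_lt_Y hzY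
  exact not_X_lt ((hlt j).trans_le hYz)

theorem disjoint_Ioo_of_subset_Icc
    (hXY : ∀ i j, X j ≤ Y i → (j : ℕ) ≤ i + 1)
    (hS : ∀ i, S i ⊆ Set.Icc (X i) (Y i))
    (hIoc : ∀ j : Fin t, Disjoint (S j.succ) (Set.Ioc (X j.succ) (Y j.castSucc)))
    (hIco : ∀ j : Fin t, Disjoint (S j.castSucc) (Set.Ico (X j.succ) (Y j.castSucc)))
    (i : Fin (t + 1)) (j : Fin t) :
    Disjoint (S i) (Set.Ioo (X j.succ) (Y j.castSucc)) := by
  refine Set.disjoint_left.mpr fun z hz ⟨hXz, hzY⟩ => ?_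
  have hij : (i : ℕ) ≤ j + 1 := hXY j.castSucc i ((hS i hz).1.trans hzY.le)
  have hji : (j : ℕ) + 1 ≤ i + 1 := hXY i j.succ (hXz.le.trans (hS i hz).2)
  obtain h | h : (i : ℕ) = j ∨ (i : ℕ) = j + 1 := by omega
  · obtain rfl : i = j.castSucc := Fin.ext h
    exact Set.disjoint_left.mp (hIco j) hz ⟨hXz.le, hzY⟩
  · obtain rfl : i = j.succ := Fin.ext h
    exact Set.disjoint_left.mp (hIoc j) hz ⟨hXz, hzY.le⟩

theorem pairwise_disjoint_Ioo_of_not_lt {ι : Type*} [LinearOrder ι] {x y : ι → Q}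
    (h : ∀ i j, i < j → ¬ x j < y i) :
    Pairwise (Function.onFun Disjoint fun i => Set.Ioo (x i) (y i)) :=
  (pairwise_disjoint_on _).mpr fun i j hij => Set.disjoint_left.mpr fun _ hi hj =>
    h i j hij (hj.1.trans hi.2)

end Zigzag

/-- The chain `c` without its two end points; the index `k` stands for the position `k + 1` of
`c`, and there are no indices when `c` has at most two elements. -/
def chainInterior {Q : Type*} {n : ℕ} (c : Fin (n + 1) → Q) (k : Fin (n - 1)) : Q :=
  c (k.succ.castLE (Nat.succ_le_succ (Nat.sub_le n 1)))

theorem chainInterior_mem_Ioo {Q : Type*} [Preorder Q] {x y : Q} {n : ℕ} {c : Fin (n + 1) → Q}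
    (hc : StrictMono c) (hhead : c 0 = x) (hlast : c (Fin.last n) = y) (k : Fin (n - 1)) :
    chainInterior c k ∈ Set.Ioo x y := by
  subst hhead hlast
  have hk : (k : ℕ) + 1 < n := Nat.add_lt_of_lt_sub k.is_lt
  exact ⟨hc (Nat.succ_pos k), hc hk⟩

theorem chainInterior_injective {Q : Type*} {n : ℕ} {c : Fin (n + 1) → Q}
    (hc : Function.Injective c) : Function.Injective (chainInterior c) :=
  hc.comp ((Fin.castLE_injective _).comp (Fin.succ_injective _))

theorem seqX_succ {Q : Type*} (x₀ : Q) {t : ℕ} (x : Fin t → Q) (j : Fin t) :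
    seqX x₀ x j.succ = x j :=
  Fin.cons_succ _ _ _

theorem seqY_castSucc {Q : Type*} (inf : Q) {t : ℕ} (y : Fin t → Q) (j : Fin t) :
    seqY inf y j.castSucc = y j :=
  Fin.snoc_castSucc _ _ _

theorem le_add_one_of_seqX_le_seqY {Q : Type*} [LE Q] {t : ℕ} {x y : Fin t → Q} {x₀ inf : Q}
    (h : ∀ i j : Fin t, i < j → ¬ x j ≤ y i) (i j : Fin (t + 1))
    (hle : seqX x₀ x j ≤ seqY inf y i) : (j : ℕ) ≤ i + 1 := by
  induction j using Fin.cases with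
  | zero => exact Nat.zero_le _
  | succ j =>
    induction i using Fin.lastCases with
    | last => exact j.succ.is_le.trans (Nat.le_succ t)
    | cast i =>
      rw [seqX_succ, seqY_castSucc] at hle
      exact Nat.succ_le_succ (not_lt.mp fun hij => h i j hij hle)

theorem injective_sigma_of_pairwise_disjoint {ι Q : Type*} {κ : ι → Type*} {S : ι → Set Q}
    {f : (i : ι) → κ i → Q} (hS : Pairwise (Function.onFun Disjoint S))
    (hf : ∀ i, Function.Injective (f i)) (hmem : ∀ i k, f i k ∈ S i) :
    Function.Injective fun p : Σ i, κ i => f p.1 p.2 := by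
  rintro ⟨i, k⟩ ⟨i', k'⟩ h
  have heq : f i k = f i' k' := h
  obtain rfl : i = i' :=
    hS.eq (Set.not_disjoint_iff.mpr ⟨f i k, hmem i k, heq ▸ hmem i' k'⟩)
  exact congrArg (Sigma.mk i) (hf i heq)

theorem saturated_chains_pairwise_distinct_general {Q : Type*} [PartialOrder Q] {t : ℕ}
    {x₀ inf : Q} {y x : Fin t → Q} (hxy : ∀ i, x i < y i)
    (hN : ∀ i j : Fin t, i < j → ¬ x j ≤ y i)
    (hnoret : ∀ i : Fin t,
      (∀ z : Q, x i < z → z ≤ y i → z ≤ seqY inf y i.succ →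
        intervalRank (x i) z + intervalRank z (seqY inf y i.succ) <
          intervalRank (x i) (seqY inf y i.succ)) ∧
      (∀ z : Q, seqX x₀ x i.castSucc ≤ z → x i ≤ z → z < y i →
        intervalRank (seqX x₀ x i.castSucc) z + intervalRank z (y i) <
          intervalRank (seqX x₀ x i.castSucc) (y i)))
    {u : Fin (t + 1) → ℕ} (hu : ∀ i, u i = intervalRank (seqX x₀ x i) (seqY inf y i))
    {α : (i : Fin (t + 1)) → Fin (u i + 1) → Q} (hα : ∀ i, StrictMono (α i))
    (hα₀ : ∀ i, α i 0 = seqX x₀ x i) (hαlast : ∀ i, α i (Fin.last (u i)) = seqY inf y i)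
    {v : Fin t → ℕ} {β : (i : Fin t) → Fin (v i + 1) → Q} (hβ : ∀ i, StrictMono (β i))
    (hβ₀ : ∀ i, β i 0 = x i) (hβlast : ∀ i, β i (Fin.last (v i)) = y i) :
    Function.Injective
      (Sum.elim
        (fun p : Σ i : Fin (t + 1), Fin (u i + 1) => α p.1 p.2)
        (fun p : Σ i : Fin t, Fin (v i - 1) => chainInterior (β p.1) p.2)) := by
  let S (i : Fin (t + 1)) : Set Q := geodesicInterval (seqX x₀ x i) (seqY inf y i)
  have hS (i) : S i ⊆ Set.Icc (seqX x₀ x i) (seqY inf y i) := geodesicInterval_subset_Icc _ _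
  have hXY := le_add_one_of_seqX_le_seqY (x₀ := x₀) (inf := inf) hN
  have hlt (j : Fin t) : seqX x₀ x j.succ < seqY inf y j.castSucc := by
    simpa only [seqX_succ, seqY_castSucc] using hxy j
  have hIoc (j : Fin t) :
      Disjoint (S j.succ) (Set.Ioc (seqX x₀ x j.succ) (seqY inf y j.castSucc)) := by
    simp only [S, seqX_succ, seqY_castSucc]
    exact disjoint_geodesicInterval fun z hz _ hzy => ((hnoret j).1 z hz.1 hz.2 hzy).ne
  have hIco (j : Fin t) :
      Disjoint (S j.castSucc) (Set.Ico (seqX x₀ x j.succ) (seqY inf y j.castSucc)) := by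
    simp only [S, seqX_succ, seqY_castSucc]
    exact disjoint_geodesicInterval fun z hz hxz _ => ((hnoret j).2 z hxz hz.1 hz.2).ne
  have hαS (i k) : α i k ∈ S i := apply_mem_geodesicInterval (hα i) (hα₀ i) (hαlast i) (hu i) k
  have hβIoo (j) := chainInterior_mem_Ioo (hβ j) (hβ₀ j) (hβlast j)
  refine Function.Injective.sumElim ?_ ?_ fun ⟨i, k⟩ ⟨j, k'⟩ => ?_
  · exact injective_sigma_of_pairwise_disjoint
      (pairwise_disjoint_of_subset_Icc hXY hlt hS hIoc hIco) (fun i => (hα i).injective) hαS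
  · exact injective_sigma_of_pairwise_disjoint
      (pairwise_disjoint_Ioo_of_not_lt fun i j hij h => hN i j hij h.le)
      (fun j => chainInterior_injective (hβ j).injective) hβIoo
  · have hdisj := disjoint_Ioo_of_subset_Icc hXY hS hIoc hIco i j
    rw [seqX_succ, seqY_castSucc] at hdisj
    exact hdisj.ne_of_mem (hαS i k) (hβIoo j k')

/-- the elements of the concatenation of saturated chains
`α_{i,0},…,α_{i,u_i}` (from `x_i` to `y_{i+1}`, `0 ≤ i ≤ t`) and
`β_{i,1},…,β_{i,v_i−1}` (interior of saturated chains from `x_i` to `y_i`,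
`1 ≤ i ≤ t`) are pairwise distinct. -/
theorem saturated_chains_pairwise_distinct
    {Q : Type*} [Fintype Q] [PartialOrder Q] [BoundedOrder Q]
    (ν : Q → ℕ) (hν : IsTP ν) (t : ℕ) (y x : Fin t → Q)
    (hy : ∀ i, y i ≠ ⊤) (hx : ∀ i, x i ≠ ⊤)
    (hN : CondN t y x)
    (hrk : ∀ i : Fin (t + 1),
      (ν (seqX ⊥ x i) : ℤ) - (ν (seqY ⊤ y i) : ℤ) =
        intervalRank (seqX ⊥ x i) (seqY ⊤ y i))
    (hnoret : ∀ i : Fin t,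
      (∀ z : Q, x i < z → z ≤ y i → z ≤ seqY ⊤ y i.succ →
        intervalRank (x i) z + intervalRank z (seqY ⊤ y i.succ) <
          intervalRank (x i) (seqY ⊤ y i.succ)) ∧
      (∀ z : Q, seqX ⊥ x i.castSucc ≤ z → x i ≤ z → z < y i →
        intervalRank (seqX ⊥ x i.castSucc) z + intervalRank z (y i) <
          intervalRank (seqX ⊥ x i.castSucc) (y i)))
    (u : Fin (t + 1) → ℕ)
    (hu : ∀ i, u i = intervalRank (seqX ⊥ x i) (seqY ⊤ y i))
    (α : (i : Fin (t + 1)) → Fin (u i + 1) → Q)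
    (hα₀ : ∀ i, α i 0 = seqX ⊥ x i)
    (hαlast : ∀ i, α i (Fin.last (u i)) = seqY ⊤ y i)
    (hαcov : ∀ (i : Fin (t + 1)) (j : Fin (u i)), α i j.castSucc ⋖ α i j.succ)
    (v : Fin t → ℕ)
    (hv : ∀ i, v i = intervalRank (x i) (y i))
    (β : (i : Fin t) → Fin (v i + 1) → Q)
    (hβ₀ : ∀ i, β i 0 = x i)
    (hβlast : ∀ i, β i (Fin.last (v i)) = y i)
    (hβcov : ∀ (i : Fin t) (j : Fin (v i)), β i j.castSucc ⋖ β i j.succ) :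
    Function.Injective
      (Sum.elim
        (fun p : Σ i : Fin (t + 1), Fin (u i + 1) => α p.1 p.2)
        (fun p : Σ i : Fin t, Fin (v i - 1) =>
          β p.1 ⟨p.2.1 + 1, by have := p.2.2; omega⟩)) :=
  saturated_chains_pairwise_distinct_general hN.2.1 hN.2.2.2 hnoret hu
    (fun i => Fin.strictMono_iff_lt_succ.mpr fun j => (hαcov i j).lt) hα₀ hαlast
    (fun i => Fin.strictMono_iff_lt_succ.mpr fun j => (hβcov i j).lt) hβ₀ hβlast
end

section
/- Let P⁺ be a poset of type (b) with parameters m ≥ 3, n, n′ ≥ 0 and 1 ≤ i₁ < ⋯ < i_p ≤ m−1. Then rank P⁺ = n + m + n′ + 1 =: r, and for all α₁ ≤ α₂ in P⁺ one has rank[x₀,α₁] + rank[α₁,α₂] + rank[α₂,∞] < r if and only if (α₁, α₂) = (z′₁, z_m). In particular rank[x₀,x] + rank[x,∞] = r for every x ∈ P⁺. -/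
/-- The covering relations of a poset of type (b) with parameters
`m ≥ 3`, `n, n' ≥ 0` and `1 ≤ ι 0 < ⋯ < ι (p-1) ≤ m − 1` (1-based indices `i_j = ι j`). -/
def TypeBCovers {Q : Type*} (m n n' p : ℕ) (hm : 3 ≤ m)
    (z z' : Fin m → Q) (w : Fin (n + 1) → Q) (w' : Fin (n' + 1) → Q)
    (ι : Fin p → ℕ) (a b : Q) : Prop :=
  (∃ i : Fin n, a = w i.castSucc ∧ b = w i.succ) ∨
  (∃ i : Fin n', a = w' i.castSucc ∧ b = w' i.succ) ∨
  (a = w (Fin.last n) ∧ b = z ⟨0, by omega⟩) ∨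
  (a = w (Fin.last n) ∧ b = z' ⟨0, by omega⟩) ∨
  (∃ (i : ℕ) (h : i + 1 < m), a = z ⟨i, by omega⟩ ∧ b = z ⟨i + 1, h⟩) ∨
  (∃ (i : ℕ) (h : i + 1 < m), a = z' ⟨i, by omega⟩ ∧ b = z' ⟨i + 1, h⟩) ∨
  (a = z ⟨m - 1, by omega⟩ ∧ b = w' 0) ∨
  (a = z' ⟨m - 1, by omega⟩ ∧ b = w' 0) ∨
  (a = z' ⟨0, by omega⟩ ∧ b = z ⟨m - 1, by omega⟩) ∨
  (∃ (j : Fin p) (a' b' : Fin m),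
    (a' : ℕ) + 1 = ι j ∧ (b' : ℕ) = ι j ∧ a = z a' ∧ b = z' b')

/-!
Let `h` number the levels of a type (b) poset upwards from `x₀ = w₀`, giving `z_i` and `z'_i` the
same level. Every cover raises `h` by one, except the shortcut `u = z'₁ ⋖ v = z_m`. A maximal chain
through the shortcut loses rank, but the shortcut is only forced between `u` and `v` themselves:
a chain starting below `u` passes through `w_n` and can climb along the `z_i` instead, and a chain
ending above `v` passes through `w'₀` and can climb along the `z'_i` instead. Hence
`rank[a, b] = h b - h a` unless `(a, b) = (u, v)`.
-/

open Relation

section IntervalRank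

variable {Q : Type*} [PartialOrder Q] {h : Q → ℕ} {a b : Q}

lemma intervalRank_head_last_eq_length (s : LTSeries Q)
    (hs : ∀ t : LTSeries Q, t.head = s.head → t.last = s.last → t.length ≤ s.length) :
    intervalRank s.head s.last = s.length := by
  refine IsGreatest.csSup_eq ⟨⟨s, s.strictMono, rfl, rfl⟩, ?_⟩
  rintro k ⟨c, hc, hhead, hlast⟩
  exact hs (LTSeries.mk k c hc) hhead hlast

lemma intervalRank_eq_one_of_covBy (hab : a ⋖ b) : intervalRank a b = 1 := by
  have hmono : StrictMono ![a, b] := by simpa [Fin.strictMono_iff_lt_succ] using hab.lt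
  refine intervalRank_head_last_eq_length (LTSeries.mk 1 ![a, b] hmono) ?_
  intro t (hhead : t 0 = a) (hlast : t (Fin.last _) = b)
  change t.length ≤ 1
  by_contra! ht
  let k : Fin (t.length + 1) := ⟨1, by omega⟩
  have ha : a < t k := hhead ▸ t.strictMono (show 0 < k by simp [k, Fin.lt_def])
  have hb : t k < b := hlast ▸ t.strictMono (show k < Fin.last _ from ht)
  exact hab.2 ha hb

/-- A covering relation along which the level function `h` increases by exactly one. -/
def GradedCovBy (h : Q → ℕ) (a b : Q) : Prop :=
  a ⋖ b ∧ h a + 1 = h b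

lemma exists_ltSeries_of_reflTransGen_gradedCovBy (hab : ReflTransGen (GradedCovBy h) a b) :
    ∃ s : LTSeries Q, s.head = a ∧ s.last = b ∧ h a + s.length = h b := by
  induction hab with
  | refl => exact ⟨RelSeries.singleton _ a, by simp⟩
  | @tail b c _ hbc ih =>
    obtain ⟨s, hhead, rfl, hlen⟩ := ih
    refine ⟨s.snoc c hbc.1.lt, by simpa using hhead, by simp, ?_⟩
    calc h a + (s.length + 1) = h s.last + 1 := by rw [← hlen, add_assoc]
      _ = h c := hbc.2

lemma add_intervalRank_of_reflTransGen_gradedCovBy (hh : StrictMono h)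
    (hab : ReflTransGen (GradedCovBy h) a b) : h a + intervalRank a b = h b := by
  obtain ⟨s, rfl, rfl, hlen⟩ := exists_ltSeries_of_reflTransGen_gradedCovBy hab
  rw [intervalRank_head_last_eq_length s fun t hhead hlast => ?_, hlen]
  have ht := (t.map h hh).head_add_length_le_nat
  rw [LTSeries.head_map, LTSeries.last_map, hhead, hlast, ← hlen] at ht
  exact Nat.le_of_add_le_add_left ht

end IntervalRank

/-- The level function `h` grades the poset except for a shortcut `u ⋖ v`, which skips levels but
can be avoided by any chain that starts strictly below `u` or ends strictly above `v`. -/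
structure IsGradedExceptAt {Q : Type*} [PartialOrder Q] (h : Q → ℕ) (u v : Q) : Prop where
  covBy : u ⋖ v
  add_one_lt : h u + 1 < h v
  add_one_eq_or : ∀ ⦃a b⦄, a ⋖ b → h a + 1 = h b ∨ a = u ∧ b = v
  detour_from_below : ∀ ⦃a⦄, a ⋖ u → ReflTransGen (GradedCovBy h) a v
  detour_to_above : ∀ ⦃b⦄, v ⋖ b → ReflTransGen (GradedCovBy h) u b

namespace IsGradedExceptAt

variable {Q : Type*} [PartialOrder Q] [LocallyFiniteOrder Q] {h : Q → ℕ} {u v a b x y : Q}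
  (H : IsGradedExceptAt h u v)
include H

lemma strictMono : StrictMono h := by
  refine (strictMono_iff_forall_covBy h).2 fun a b hab => ?_
  rcases H.add_one_eq_or hab with hlevel | ⟨rfl, rfl⟩
  · omega
  · exact (Nat.lt_succ_self _).trans H.add_one_lt

lemma reflTransGen_gradedCovBy_or_eq (hab : a ≤ b) :
    ReflTransGen (GradedCovBy h) a b ∨ a = u ∧ b = v := by
  have hpath : ReflTransGen (· ⋖ ·) a b := le_iff_reflTransGen_covBy.1 hab
  clear hab
  induction hpath with
  | refl => exact .inl .refl
  | tail _ hbc ih =>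
    rcases ih with ih | ⟨rfl, rfl⟩
    · rcases H.add_one_eq_or hbc with hlevel | ⟨rfl, rfl⟩
      · exact .inl (ih.tail ⟨hbc, hlevel⟩)
      · rcases ih.cases_tail with rfl | ⟨d, had, hdu⟩
        · exact .inr ⟨rfl, rfl⟩
        · exact .inl (had.trans (H.detour_from_below hdu.1))
    · exact .inl (H.detour_to_above hbc)

lemma add_intervalRank (hab : a ≤ b) (hne : ¬(a = u ∧ b = v)) :
    h a + intervalRank a b = h b :=
  add_intervalRank_of_reflTransGen_gradedCovBy H.strictMono
    ((H.reflTransGen_gradedCovBy_or_eq hab).resolve_right hne)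

lemma intervalRank_add_intervalRank (hx : IsBot x) (hy : IsTop y) (hxu : x ≠ u) (hvy : v ≠ y)
    (a : Q) :
    intervalRank x a + intervalRank a y = intervalRank x y := by
  have hxa := H.add_intervalRank (hx a) fun he => hxu he.1
  have hay := H.add_intervalRank (hy a) fun he => hvy he.2.symm
  have hxy := H.add_intervalRank (hx y) fun he => hxu he.1
  omega

lemma intervalRank_add_add_lt_iff (hx : IsBot x) (hy : IsTop y) (hxu : x ≠ u) (hvy : v ≠ y)
    (hab : a ≤ b) :
    intervalRank x a + intervalRank a b + intervalRank b y < intervalRank x y ↔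
      a = u ∧ b = v := by
  have hxa := H.add_intervalRank (hx a) fun he => hxu he.1
  have hby := H.add_intervalRank (hy b) fun he => hvy he.2.symm
  have hxy := H.add_intervalRank (hx y) fun he => hxu he.1
  constructor
  · intro hlt
    by_contra hne
    have := H.add_intervalRank hab hne
    omega
  · rintro ⟨rfl, rfl⟩
    have := intervalRank_eq_one_of_covBy H.covBy
    have := H.add_one_lt
    omega

end IsGradedExceptAt

/-- The given sequences list the elements of a poset of type (b), without repetition, and
`TypeBCovers` describes its covering relations. -/
structure IsTypeB {Q : Type*} [PartialOrder Q] (m n n' p : ℕ) (hm : 3 ≤ m)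
    (z z' : Fin m → Q) (w : Fin (n + 1) → Q) (w' : Fin (n' + 1) → Q) (ι : Fin p → ℕ) :
    Prop where
  bijective : Function.Bijective
    (Sum.elim (Sum.elim z z') (Sum.elim w w') :
      (Fin m ⊕ Fin m) ⊕ (Fin (n + 1) ⊕ Fin (n' + 1)) → Q)
  covBy_iff : ∀ a b : Q, a ⋖ b ↔ TypeBCovers m n n' p hm z z' w w' ι a b

namespace IsTypeB

variable {Q : Type*} [PartialOrder Q] {m n n' p : ℕ} {hm : 3 ≤ m}
  {z z' : Fin m → Q} {w : Fin (n + 1) → Q} {w' : Fin (n' + 1) → Q} {ι : Fin p → ℕ}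
  {a b : Q} {i j : Fin m}

/-- The level of the element at a given position in the four sequences, counted upwards from `w₀`;
`z_i` and `z'_i` share a level. As `z` and `z'` are indexed from zero, `z₁` has level `n + 1`. -/
def indexLevel (m n n' : ℕ) : (Fin m ⊕ Fin m) ⊕ (Fin (n + 1) ⊕ Fin (n' + 1)) → ℕ
  | .inl (.inl i) | .inl (.inr i) => n + 1 + i
  | .inr (.inl i) => i
  | .inr (.inr i) => n + 1 + m + i

/-- The level of an element of a poset of type (b), read off from its position in the four
sequences. -/
noncomputable def level (hP : IsTypeB m n n' p hm z z' w w' ι) (q : Q) : ℕ :=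
  indexLevel m n n' ((Equiv.ofBijective _ hP.bijective).symm q)

variable (hP : IsTypeB m n n' p hm z z' w w' ι)
include hP

lemma level_z (i : Fin m) : hP.level (z i) = n + 1 + i :=
  congrArg (indexLevel m n n') (Equiv.ofBijective_symm_apply_apply _ hP.bijective (.inl (.inl i)))

lemma level_z' (i : Fin m) : hP.level (z' i) = n + 1 + i :=
  congrArg (indexLevel m n n') (Equiv.ofBijective_symm_apply_apply _ hP.bijective (.inl (.inr i)))

lemma level_w (i : Fin (n + 1)) : hP.level (w i) = i :=
  congrArg (indexLevel m n n') (Equiv.ofBijective_symm_apply_apply _ hP.bijective (.inr (.inl i)))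

lemma level_w' (i : Fin (n' + 1)) : hP.level (w' i) = n + 1 + m + i :=
  congrArg (indexLevel m n n') (Equiv.ofBijective_symm_apply_apply _ hP.bijective (.inr (.inr i)))

lemma z_ne_z' (i j : Fin m) : z i ≠ z' j := fun he =>
  Sum.inl_ne_inr (Sum.inl_injective (hP.bijective.1 (a₁ := .inl (.inl i)) (a₂ := .inl (.inr j)) he))

lemma w_ne_z' (k : Fin (n + 1)) (i : Fin m) : w k ≠ z' i := fun he => by
  have := congrArg hP.level he
  rw [level_w, level_z'] at this
  omega

lemma z_ne_w' (i : Fin m) (k : Fin (n' + 1)) : z i ≠ w' k := fun he => by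
  have := congrArg hP.level he
  rw [level_z, level_w'] at this
  omega

lemma level_add_one_eq_or (hab : a ⋖ b) :
    hP.level a + 1 = hP.level b ∨ a = z' ⟨0, by omega⟩ ∧ b = z ⟨m - 1, by omega⟩ := by
  rcases (hP.covBy_iff a b).1 hab with ⟨i, rfl, rfl⟩ | ⟨i, rfl, rfl⟩ | ⟨rfl, rfl⟩ | ⟨rfl, rfl⟩ |
    ⟨i, hi, rfl, rfl⟩ | ⟨i, hi, rfl, rfl⟩ | ⟨rfl, rfl⟩ | ⟨rfl, rfl⟩ | hshortcut |
    ⟨j, i, i', hi, hi', rfl, rfl⟩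
  all_goals
    first
    | exact .inr hshortcut
    | left
      simp only [level_z, level_z', level_w, level_w', Fin.val_castSucc, Fin.val_succ, Fin.val_last,
        Fin.val_zero]
      try omega

lemma gradedCovBy_z (hij : i ⋖ j) : GradedCovBy hP.level (z i) (z j) := by
  obtain ⟨i, hi⟩ := i
  obtain ⟨j, hj⟩ := j
  obtain rfl : i + 1 = j := by simpa [Fin.covBy_iff] using hij
  refine ⟨(hP.covBy_iff _ _).2 ?_, by rw [level_z, level_z, add_assoc]⟩
  iterate 4 right
  exact .inl ⟨i, hj, rfl, rfl⟩

lemma gradedCovBy_z' (hij : i ⋖ j) : GradedCovBy hP.level (z' i) (z' j) := by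
  obtain ⟨i, hi⟩ := i
  obtain ⟨j, hj⟩ := j
  obtain rfl : i + 1 = j := by simpa [Fin.covBy_iff] using hij
  refine ⟨(hP.covBy_iff _ _).2 ?_, by rw [level_z', level_z', add_assoc]⟩
  iterate 5 right
  exact .inl ⟨i, hj, rfl, rfl⟩

lemma gradedCovBy_w_last_z_zero :
    GradedCovBy hP.level (w (Fin.last n)) (z ⟨0, by omega⟩) :=
  ⟨(hP.covBy_iff _ _).2 (.inr <| .inr <| .inl ⟨rfl, rfl⟩), by
    rw [level_w, level_z, Fin.val_last, add_zero]⟩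

lemma gradedCovBy_z'_last_w'_zero :
    GradedCovBy hP.level (z' ⟨m - 1, by omega⟩) (w' 0) := by
  refine ⟨(hP.covBy_iff _ _).2 ?_, by rw [level_z', level_w', Fin.val_zero]; dsimp only; omega⟩
  iterate 7 right
  exact .inl ⟨rfl, rfl⟩

lemma z'_zero_covBy_z_last : z' ⟨0, by omega⟩ ⋖ z ⟨m - 1, by omega⟩ := by
  refine (hP.covBy_iff _ _).2 ?_
  iterate 8 right
  exact .inl ⟨rfl, rfl⟩

lemma reflTransGen_gradedCovBy_z (hij : i ≤ j) :
    ReflTransGen (GradedCovBy hP.level) (z i) (z j) :=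
  (le_iff_reflTransGen_covBy.1 hij).lift z fun _ _ => hP.gradedCovBy_z

lemma reflTransGen_gradedCovBy_z' (hij : i ≤ j) :
    ReflTransGen (GradedCovBy hP.level) (z' i) (z' j) :=
  (le_iff_reflTransGen_covBy.1 hij).lift z' fun _ _ => hP.gradedCovBy_z'

lemma eq_w_last_of_covBy_z'_zero (ha : a ⋖ z' ⟨0, by omega⟩) : a = w (Fin.last n) := by
  have hlevel : hP.level (z' ⟨0, by omega⟩) = n + 1 := hP.level_z' _
  rcases (hP.covBy_iff _ _).1 ha with ⟨i, -, he⟩ | ⟨i, -, he⟩ | ⟨hw, -⟩ | ⟨hw, -⟩ |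
    ⟨i, hi, -, he⟩ | ⟨i, hi, -, he⟩ | ⟨-, he⟩ | ⟨-, he⟩ | ⟨-, he⟩ | ⟨j, i, i', hi, hi', -, he⟩
  -- Every other cover ends at one of the `z_i` or at a level other than `n + 1`.
  all_goals
    first
    | exact hw
    | exact absurd he.symm (hP.z_ne_z' _ _)
    | rw [he] at hlevel
      simp only [level_z', level_w, level_w', Fin.val_succ, Fin.val_zero] at hlevel
      omega

lemma eq_w'_zero_of_z_last_covBy (hb : z ⟨m - 1, by omega⟩ ⋖ b) : b = w' 0 := by
  have hlevel : hP.level (z ⟨m - 1, by omega⟩) = n + 1 + (m - 1) := hP.level_z _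
  rcases (hP.covBy_iff _ _).1 hb with ⟨i, he, -⟩ | ⟨i, he, -⟩ | ⟨he, -⟩ | ⟨he, -⟩ |
    ⟨i, hi, he, -⟩ | ⟨i, hi, he, -⟩ | ⟨-, hw'⟩ | ⟨-, hw'⟩ | ⟨he, -⟩ | ⟨j, i, i', hi, hi', he, -⟩
  -- Every other cover starts at one of the `z'_i` or at a level other than that of `z_m`.
  all_goals
    first
    | exact hw'
    | exact absurd he (hP.z_ne_z' _ _)
    | rw [he] at hlevel
      simp only [level_z, level_w, level_w', Fin.val_castSucc, Fin.val_last] at hlevel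
      omega

lemma isGradedExceptAt :
    IsGradedExceptAt hP.level (z' ⟨0, by omega⟩) (z ⟨m - 1, by omega⟩) where
  covBy := hP.z'_zero_covBy_z_last
  add_one_lt := by rw [level_z, level_z']; dsimp only; omega
  add_one_eq_or _ _ := hP.level_add_one_eq_or
  detour_from_below a ha := by
    rw [hP.eq_w_last_of_covBy_z'_zero ha]
    exact .head hP.gradedCovBy_w_last_z_zero (hP.reflTransGen_gradedCovBy_z (Nat.zero_le _))
  detour_to_above b hb := by
    rw [hP.eq_w'_zero_of_z_last_covBy hb]
    exact .tail (hP.reflTransGen_gradedCovBy_z' (Nat.zero_le _)) hP.gradedCovBy_z'_last_w'_zero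

end IsTypeB

/-- in a poset of type (b), `rank P⁺ = n + m + n' + 1 = r`; for
`α₁ ≤ α₂` the strict inequality
`rank[x₀,α₁] + rank[α₁,α₂] + rank[α₂,∞] < r` holds iff `(α₁,α₂) = (z'₁, z_m)`;
in particular `rank[x₀,x] + rank[x,∞] = r` for every `x`. -/
theorem typeB_rank_characterization
    {Q : Type*} [Fintype Q] [PartialOrder Q]
    (m n n' p : ℕ) (hm : 3 ≤ m)
    (z z' : Fin m → Q) (w : Fin (n + 1) → Q) (w' : Fin (n' + 1) → Q)
    (ι : Fin p → ℕ)
    (hι₁ : ∀ j, 1 ≤ ι j) (hι₂ : ∀ j, ι j ≤ m - 1) (hιmono : StrictMono ι)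
    (hbij : Function.Bijective
      (Sum.elim (Sum.elim z z') (Sum.elim w w') :
        (Fin m ⊕ Fin m) ⊕ (Fin (n + 1) ⊕ Fin (n' + 1)) → Q))
    (hcov : ∀ a b : Q, a ⋖ b ↔ TypeBCovers m n n' p hm z z' w w' ι a b)
    (hbot : ∀ q : Q, w 0 ≤ q)
    (htop : ∀ q : Q, q ≤ w' (Fin.last n')) :
    intervalRank (w 0) (w' (Fin.last n')) = n + m + n' + 1 ∧
    (∀ a₁ a₂ : Q, a₁ ≤ a₂ →
      (intervalRank (w 0) a₁ + intervalRank a₁ a₂ + intervalRank a₂ (w' (Fin.last n')) <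
          n + m + n' + 1 ↔
        (a₁ = z' ⟨0, by omega⟩ ∧ a₂ = z ⟨m - 1, by omega⟩))) ∧
    (∀ q : Q,
      intervalRank (w 0) q + intervalRank q (w' (Fin.last n')) = n + m + n' + 1) := by
  classical
  let : LocallyFiniteOrder Q := Fintype.toLocallyFiniteOrder
  have hP : IsTypeB m n n' p hm z z' w w' ι := ⟨hbij, hcov⟩
  have hgraded := hP.isGradedExceptAt
  have hbot_ne : w 0 ≠ z' ⟨0, by omega⟩ := hP.w_ne_z' _ _
  have hne_top : z ⟨m - 1, by omega⟩ ≠ w' (Fin.last n') := hP.z_ne_w' _ _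
  have hrank : intervalRank (w 0) (w' (Fin.last n')) = n + m + n' + 1 := by
    have := hgraded.add_intervalRank (hbot (w' (Fin.last n'))) fun he => hbot_ne he.1
    rw [hP.level_w, hP.level_w', Fin.val_zero, Fin.val_last] at this
    omega
  rw [← hrank]
  exact ⟨rfl, fun _ _ => hgraded.intervalRank_add_add_lt_iff hbot htop hbot_ne hne_top,
    hgraded.intervalRank_add_intervalRank hbot htop hbot_ne hne_top⟩
end

section
/- Let P⁺ be a poset of type (b) with parameters m ≥ 3, n, n′ ≥ 0 and 1 ≤ i₁ < ⋯ < i_p ≤ m−1, and set P = P⁺ ∖ {∞}. For 1 ≤ h ≤ m−1 define ν_h : P⁺ → ℕ by ν_h(x) = rank[x,∞] if x ∈ [z′₁,∞] ∖ {z_m}, and ν_h(x) = rank[x,∞] + m − 1 − h otherwise. Then each ν_h is a minimal element of the poset (T(P), ≤), these are pairwise distinct, and every minimal element of (T(P), ≤) equals some ν_h; thus (T(P), ≤) has exactly m − 1 minimal elements. -/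
/-- `ν ∈ T(P)` where `inf` plays the role of `∞` (the maximum of `P⁺`). -/
def IsTPAt {Q : Type*} [PartialOrder Q] (inf : Q) (ν : Q → ℕ) : Prop :=
  ν inf = 0 ∧ StrictAnti ν

/-- `ν` is a minimal element of the poset `(T(P), ≤)`. -/
def IsMinTPAt {Q : Type*} [PartialOrder Q] (inf : Q) (ν : Q → ℕ) : Prop :=
  IsTPAt inf ν ∧ ∀ μ : Q → ℕ, IsTPAt inf μ → LeTP μ ν → μ = ν

/-- The function `ν_h` on a poset of type (a) or (b): `ν_h(x) = rank[x,∞]` for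
`x ∈ [z'₁,∞] ∖ {z_m}` and `ν_h(x) = rank[x,∞] + m − 1 − h` otherwise. -/
noncomputable def nuH {Q : Type*} [PartialOrder Q] [DecidableEq Q]
    [DecidableRel ((· ≤ ·) : Q → Q → Prop)]
    (m n' h : ℕ) (hm : 3 ≤ m) (z z' : Fin m → Q) (w' : Fin (n' + 1) → Q) : Q → ℕ :=
  fun q =>
    if z' ⟨0, by omega⟩ ≤ q ∧ q ≠ z ⟨m - 1, by omega⟩ then
      intervalRank q (w' (Fin.last n'))
    else
      intervalRank q (w' (Fin.last n')) + (m - 1 - h)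

section Rank

lemma antitone_add_val_of_strictAnti {k : ℕ} {f : Fin (k + 1) → ℕ} (hf : StrictAnti f) :
    Antitone fun i => f i + (i : ℕ) :=
  Fin.antitone_iff_succ_le.2 fun i => by
    have := hf i.castSucc_lt_succ
    simp only [Fin.val_castSucc, Fin.val_succ]
    omega

variable {Q : Type*} [PartialOrder Q] {t : Q} {r : Q → ℕ}

lemma exists_chain_of_forall_exists_lt (hr : ∀ q, q ≠ t → ∃ b, q < b ∧ r q = r b + 1)
    (ht : r t = 0) {k : ℕ} {q : Q} (hq : r q = k) :
    ∃ c : Fin (k + 1) → Q, StrictMono c ∧ c 0 = q ∧ c (Fin.last k) = t := by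
  induction k generalizing q with
  | zero =>
    have hqt : q = t := by
      by_contra hne
      obtain ⟨b, -, hb⟩ := hr q hne
      omega
    exact ⟨fun _ => q, Subsingleton.strictMono (α := Fin 1) _, rfl, hqt⟩
  | succ k ih =>
    obtain ⟨b, hqb, hb⟩ := hr q (by rintro rfl; omega)
    obtain ⟨c, hc, hc₀, hct⟩ := ih (q := b) (by omega)
    exact ⟨Matrix.vecCons q c, strictMono_vecCons.2 ⟨hc₀.symm ▸ hqb, hc⟩, rfl, hct⟩

lemma intervalRank_eq_of_strictAnti (hanti : StrictAnti r) (ht : r t = 0)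
    (hr : ∀ q, q ≠ t → ∃ b, q < b ∧ r q = r b + 1) (q : Q) : intervalRank q t = r q := by
  have hgreatest : IsGreatest
      {n : ℕ | ∃ c : Fin (n + 1) → Q, StrictMono c ∧ c 0 = q ∧ c (Fin.last n) = t} (r q) := by
    refine ⟨exists_chain_of_forall_exists_lt hr ht rfl, ?_⟩
    rintro k ⟨c, hc, rfl, hct⟩
    simpa [hct, ht] using
      antitone_add_val_of_strictAnti (hanti.comp_strictMono hc) (Fin.zero_le (Fin.last k))
  exact hgreatest.csSup_eq

end Rank

lemma leTP_of_antitone {Q : Type*} [PartialOrder Q] {t : Q} {μ ν : Q → ℕ} (ht : ∀ q, q ≤ t)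
    (hμt : μ t ≤ ν t) (hanti : Antitone fun q => (ν q : ℤ) - μ q) : LeTP μ ν := by
  refine ⟨fun q => ?_, fun _ _ h => hanti h⟩
  have : (ν t : ℤ) - μ t ≤ ν q - μ q := hanti (ht q)
  omega

/-- The covers allowed in a two-chain poset with first chain `u` and second chain `v`: a step along
either chain, the step from `v 0` to the last element of `u`, and the steps from `u (n + k)` to
`v k`. The index conditions are equations so that case analysis applies to arbitrary covers. -/
inductive TwoChainStep {Q : Type*} {m n n' : ℕ} (u : Fin (n + m + 1) → Q)
    (v : Fin (m + n' + 1) → Q) : Q → Q → Prop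
  | left {i j : Fin (n + m + 1)} (hij : (j : ℕ) = i + 1) : TwoChainStep u v (u i) (u j)
  | right {i j : Fin (m + n' + 1)} (hij : (j : ℕ) = i + 1) : TwoChainStep u v (v i) (v j)
  | back : TwoChainStep u v (v 0) (u (Fin.last _))
  | cross {i : Fin (n + m + 1)} {j : Fin (m + n' + 1)} (hij : (i : ℕ) = n + j) :
      TwoChainStep u v (u i) (v j)

/-- The poset `Q` is the disjoint union of the chains `u` and `v`, and all its covers are of the
kinds listed in `TwoChainStep`. This abstracts posets of type (b): `u` runs through `w₀, …, z_m` and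
`v` through `z'₁, …, w'_{n'}`. Of the cross steps, only the one from the last element of `u` is
required to be present. -/
structure IsTwoChain {Q : Type*} [PartialOrder Q] {m n n' : ℕ} (u : Fin (n + m + 1) → Q)
    (v : Fin (m + n' + 1) → Q) : Prop where
  bijective : Function.Bijective (Sum.elim u v)
  strictMono_left : StrictMono u
  strictMono_right : StrictMono v
  bot_lt_top : v 0 < u (Fin.last _)
  top_lt : u (Fin.last _) < v ⟨m, by omega⟩
  step_of_covBy : ∀ ⦃a b⦄, a ⋖ b → TwoChainStep u v a b

namespace IsTwoChain

variable {Q : Type*} [PartialOrder Q] {m n n' c : ℕ} {u : Fin (n + m + 1) → Q}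
  {v : Fin (m + n' + 1) → Q} {μ ν : Q → ℕ}

lemma exists_eq (h : IsTwoChain u v) (q : Q) : (∃ i, u i = q) ∨ ∃ j, v j = q := by
  obtain ⟨i | j, hq⟩ := h.bijective.surjective q
  exacts [.inl ⟨i, hq⟩, .inr ⟨j, hq⟩]

lemma left_ne_right (h : IsTwoChain u v) (i j) : u i ≠ v j := fun hij =>
  Sum.inl_ne_inr (h.bijective.injective (a₁ := .inl i) (a₂ := .inr j) hij)

lemma le_last (h : IsTwoChain u v) (q : Q) : q ≤ v (Fin.last _) := by
  have hv (j) : v j ≤ v (Fin.last _) := h.strictMono_right.monotone j.le_last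
  rcases h.exists_eq q with ⟨i, rfl⟩ | ⟨j, rfl⟩
  · exact (h.strictMono_left.monotone i.le_last).trans (h.top_lt.le.trans (hv _))
  · exact hv j

/-- The rank `q ↦ rank[q, ∞]` raised by `c` on the first chain, given by its explicit values. The
truncated subtractions are exact, since both are from the last index of a chain. -/
noncomputable def raisedRank (h : IsTwoChain u v) (c : ℕ) : Q → ℕ :=
  fun q => Sum.elim (fun i : Fin (n + m + 1) => n' + 1 + c + (n + m - i))
    (fun j : Fin (m + n' + 1) => m + n' - j)
    ((Equiv.ofBijective _ h.bijective).symm q)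

lemma raisedRank_left (h : IsTwoChain u v) (c i) :
    h.raisedRank c (u i) = n' + 1 + c + (n + m - i) := by
  unfold raisedRank
  rw [← Sum.elim_inl u v i, Equiv.ofBijective_symm_apply_apply, Sum.elim_inl]

lemma raisedRank_right (h : IsTwoChain u v) (c j) : h.raisedRank c (v j) = m + n' - j := by
  unfold raisedRank
  rw [← Sum.elim_inr u v j, Equiv.ofBijective_symm_apply_apply, Sum.elim_inr]

lemma raisedRank_last (h : IsTwoChain u v) (c) : h.raisedRank c (v (Fin.last _)) = 0 := by
  simp [raisedRank_right]

lemma raisedRank_injective (h : IsTwoChain u v) : Function.Injective h.raisedRank :=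
  fun c d hcd => by
    have := congrFun hcd (u 0)
    simp only [raisedRank_left] at this
    omega

lemma add_le_add_of_cross (h : IsTwoChain u v) (hν : StrictAnti ν)
    {i : Fin (n + m + 1)} {j : Fin (m + n' + 1)} (hij : (i : ℕ) = n + j) :
    ν (v j) + ν (u (Fin.last _)) + m ≤ ν (u i) + ν (v 0) := by
  have hu := antitone_add_val_of_strictAnti (hν.comp_strictMono h.strictMono_left) i.le_last
  have hv := antitone_add_val_of_strictAnti (hν.comp_strictMono h.strictMono_right) j.zero_le
  simp only [Function.comp_apply, Fin.val_last, Fin.val_zero] at hu hv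
  omega

variable [LocallyFiniteOrder Q]

lemma strictAnti_raisedRank (h : IsTwoChain u v) (hc : c + 2 ≤ m) :
    StrictAnti (h.raisedRank c) :=
  (strictAnti_iff_forall_covBy _).2 fun a b hab => by
    cases h.step_of_covBy hab <;>
      simp only [raisedRank_left, raisedRank_right, Fin.val_zero, Fin.val_last] <;> omega

lemma isTPAt_raisedRank (h : IsTwoChain u v) (hc : c + 2 ≤ m) :
    IsTPAt (v (Fin.last _)) (h.raisedRank c) :=
  ⟨h.raisedRank_last c, h.strictAnti_raisedRank hc⟩

lemma intervalRank_last (h : IsTwoChain u v) (hm : 2 ≤ m) (q : Q) :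
    intervalRank q (v (Fin.last _)) = h.raisedRank 0 q := by
  refine intervalRank_eq_of_strictAnti (h.strictAnti_raisedRank (by omega))
    (h.raisedRank_last 0) (fun q hq => ?_) q
  rcases h.exists_eq q with ⟨i, rfl⟩ | ⟨j, rfl⟩
  · induction i using Fin.lastCases with
    | last =>
      exact ⟨_, h.top_lt, by simp only [raisedRank_left, raisedRank_right, Fin.val_last]; omega⟩
    | cast i =>
      exact ⟨_, h.strictMono_left i.castSucc_lt_succ,
        by simp only [raisedRank_left, Fin.val_castSucc, Fin.val_succ]; omega⟩
  · induction j using Fin.lastCases with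
    | last => exact absurd rfl hq
    | cast j =>
      exact ⟨_, h.strictMono_right j.castSucc_lt_succ,
        by simp only [raisedRank_right, Fin.val_castSucc, Fin.val_succ]; omega⟩

lemma not_bot_le_left (h : IsTwoChain u v) (hm : 2 ≤ m) {i} (hi : i ≠ Fin.last _) :
    ¬ v 0 ≤ u i := fun hle => by
  have hlt := h.strictAnti_raisedRank (c := m - 2) (by omega)
    (hle.lt_of_ne (h.left_ne_right i 0).symm)
  have := Fin.val_lt_last hi
  simp only [raisedRank_left, raisedRank_right, Fin.val_zero] at hlt
  omega

lemma bot_le_and_ne_top_iff (h : IsTwoChain u v) (hm : 2 ≤ m) (q : Q) :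
    v 0 ≤ q ∧ q ≠ u (Fin.last _) ↔ q ∈ Set.range v := by
  constructor
  · rintro ⟨hle, hne⟩
    rcases h.exists_eq q with ⟨i, rfl⟩ | hq
    · exact absurd hle (h.not_bot_le_left hm (ne_of_apply_ne u hne))
    · exact hq
  · rintro ⟨j, rfl⟩
    exact ⟨h.strictMono_right.monotone (Fin.zero_le j), (h.left_ne_right _ j).symm⟩

lemma isMinTPAt_raisedRank (h : IsTwoChain u v) (hc : c + 2 ≤ m) :
    IsMinTPAt (v (Fin.last _)) (h.raisedRank c) := by
  refine ⟨h.isTPAt_raisedRank hc, fun μ ⟨hμt, hμ⟩ ⟨hle, hanti⟩ => ?_⟩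
  have hright (j) : μ (v j) = h.raisedRank c (v j) := by
    have hdrop := antitone_add_val_of_strictAnti (hμ.comp_strictMono h.strictMono_right) j.le_last
    have hj := hle (v j)
    simp only [Function.comp_apply, hμt, raisedRank_right, Fin.val_last] at hdrop hj ⊢
    omega
  have htop : μ (u (Fin.last _)) = h.raisedRank c (u (Fin.last _)) := by
    have hback := hanti _ _ h.bot_lt_top.le
    have hu := hle (u (Fin.last _))
    rw [hright] at hback
    omega
  have hleft (i) : μ (u i) = h.raisedRank c (u i) := by
    have hdrop := antitone_add_val_of_strictAnti (hμ.comp_strictMono h.strictMono_left) i.le_last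
    have hi := hle (u i)
    simp only [Function.comp_apply, htop, raisedRank_left, Fin.val_last] at hdrop hi ⊢
    omega
  funext q
  rcases h.exists_eq q with ⟨i, rfl⟩ | ⟨j, rfl⟩
  exacts [hleft i, hright j]

lemma exists_raisedRank_leTP (h : IsTwoChain u v) (hm : 2 ≤ m) (hν : StrictAnti ν) :
    ∃ c, c + 2 ≤ m ∧ LeTP (h.raisedRank c) ν := by
  have hgap := hν h.bot_lt_top
  refine ⟨m - 1 - (ν (v 0) - ν (u (Fin.last _))), by omega,
    leTP_of_antitone h.le_last (by simp only [raisedRank_last, zero_le]) ?_⟩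
  refine (antitone_iff_forall_covBy _).2 fun a b hab => ?_
  have hlt := hν hab.lt
  cases h.step_of_covBy hab with
  | left hij | right hij | back =>
    simp only [raisedRank_left, raisedRank_right, Fin.val_zero, Fin.val_last]
    omega
  | cross hij =>
    have hcross := h.add_le_add_of_cross hν hij
    simp only [raisedRank_left, raisedRank_right]
    omega

theorem isMinTPAt_iff (h : IsTwoChain u v) (hm : 2 ≤ m) :
    IsMinTPAt (v (Fin.last _)) ν ↔ ∃ c < m - 1, h.raisedRank c = ν := by
  constructor
  · rintro ⟨⟨-, hν⟩, hmin⟩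
    obtain ⟨c, hc, hle⟩ := h.exists_raisedRank_leTP hm hν
    exact ⟨c, by omega, hmin _ (h.isTPAt_raisedRank hc) hle⟩
  · rintro ⟨c, hc, rfl⟩
    exact h.isMinTPAt_raisedRank (by omega)

theorem ncard_isMinTPAt (h : IsTwoChain u v) (hm : 2 ≤ m) :
    {ν | IsMinTPAt (v (Fin.last _)) ν}.ncard = m - 1 := by
  have himage : {ν | IsMinTPAt (v (Fin.last _)) ν} = h.raisedRank '' Set.Iio (m - 1) :=
    Set.ext fun ν => h.isMinTPAt_iff hm
  rw [himage, Set.ncard_image_of_injective _ h.raisedRank_injective, Set.ncard_Iio_nat]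

end IsTwoChain

section TypeB

lemma strictMono_append {α : Type*} [Preorder α] {k l : ℕ} {f : Fin k → α} {g : Fin l → α}
    (hf : StrictMono f) (hg : StrictMono g) (hfg : ∀ i j, f i < g j) :
    StrictMono (Fin.append f g) := fun i j hij => by
  induction i using Fin.addCases <;> induction j using Fin.addCases <;>
    simp only [Fin.append_left, Fin.append_right]
  case left.left i j => exact hf hij
  case left.right i j => exact hfg i j
  case right.left i j =>
    simp only [Fin.lt_def, Fin.val_natAdd, Fin.val_castAdd] at hij
    omega
  case right.right i j => exact hg ((Fin.natAdd_lt_natAdd_iff k).1 hij)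

lemma strictMono_of_lt_mk_succ {α : Type*} [Preorder α] {k : ℕ} {f : Fin k → α}
    (hf : ∀ (i : ℕ) (hi : i + 1 < k), f ⟨i, by omega⟩ < f ⟨i + 1, hi⟩) : StrictMono f := by
  cases k with
  | zero => exact Subsingleton.strictMono f
  | succ k => exact Fin.strictMono_iff_lt_succ.2 fun i => hf i (by omega)

variable {m n n' : ℕ} {Q : Type*}

/-- The chain `w₀, …, w_n, z₁, …, z_m` of a poset of type (b), indexed for `IsTwoChain`. -/
def leftChain (w : Fin (n + 1) → Q) (z : Fin m → Q) : Fin (n + m + 1) → Q :=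
  Fin.append w z ∘ Fin.cast (Nat.add_right_comm n m 1)

/-- The chain `z'₁, …, z'_m, w'₀, …, w'_{n'}` of a poset of type (b), indexed for `IsTwoChain`. -/
def rightChain (z' : Fin m → Q) (w' : Fin (n' + 1) → Q) : Fin (m + n' + 1) → Q :=
  Fin.append (n := n' + 1) z' w'

lemma leftChain_w (w : Fin (n + 1) → Q) (z : Fin m → Q) (k : Fin (n + 1)) :
    leftChain w z ⟨k, by omega⟩ = w k :=
  Fin.append_left w z k

lemma leftChain_z (w : Fin (n + 1) → Q) (z : Fin m → Q) (i : Fin m) :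
    leftChain w z ⟨n + 1 + i, by omega⟩ = z i :=
  Fin.append_right w z i

lemma rightChain_z' (z' : Fin m → Q) (w' : Fin (n' + 1) → Q) (i : Fin m) :
    rightChain z' w' ⟨i, by omega⟩ = z' i :=
  Fin.append_left (n := n' + 1) z' w' i

lemma rightChain_w' (z' : Fin m → Q) (w' : Fin (n' + 1) → Q) (k : Fin (n' + 1)) :
    rightChain z' w' ⟨m + k, by omega⟩ = w' k :=
  Fin.append_right (n := n' + 1) z' w' k

lemma leftChain_last (w : Fin (n + 1) → Q) (z : Fin m → Q) (hm : 0 < m) :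
    leftChain w z (Fin.last _) = z ⟨m - 1, by omega⟩ := by
  rw [← leftChain_z w z]
  congr
  simp only [Fin.ext_iff, Fin.val_last]
  omega

lemma rightChain_zero (z' : Fin m → Q) (w' : Fin (n' + 1) → Q) (hm : 0 < m) :
    rightChain z' w' 0 = z' ⟨0, hm⟩ :=
  rightChain_z' z' w' ⟨0, hm⟩

lemma rightChain_last (z' : Fin m → Q) (w' : Fin (n' + 1) → Q) :
    rightChain z' w' (Fin.last _) = w' (Fin.last n') :=
  rightChain_w' z' w' (Fin.last n')

lemma sumElim_leftChain_rightChain (w : Fin (n + 1) → Q) (z z' : Fin m → Q)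
    (w' : Fin (n' + 1) → Q) :
    Sum.elim (leftChain w z) (rightChain z' w') ∘
      Equiv.sumCongr (finSumFinEquiv.trans (finCongr (Nat.add_right_comm n 1 m)))
        (finSumFinEquiv (n := n' + 1)) =
    Sum.elim (Sum.elim z z') (Sum.elim w w') ∘
      (Equiv.sumCongr (Equiv.sumComm _ _) (Equiv.refl _)).trans (Equiv.sumSumSumComm _ _ _ _) := by
  funext x
  rcases x with (k | i) | (i | k)
  · exact leftChain_w w z k
  · exact leftChain_z w z i
  · exact rightChain_z' z' w' i
  · exact rightChain_w' z' w' k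

variable {z z' : Fin m → Q} {w : Fin (n + 1) → Q} {w' : Fin (n' + 1) → Q}

lemma bijective_leftChain_rightChain
    (hbij : Function.Bijective (Sum.elim (Sum.elim z z') (Sum.elim w w'))) :
    Function.Bijective (Sum.elim (leftChain w z) (rightChain z' w')) := by
  rw [← Equiv.bijective_comp, sumElim_leftChain_rightChain, Equiv.bijective_comp]
  exact hbij

variable {p : ℕ} {ι : Fin p → ℕ} {hm : 3 ≤ m}

lemma TypeBCovers.twoChainStep {a b : Q} (h : TypeBCovers m n n' p hm z z' w w' ι a b) :
    TwoChainStep (leftChain w z) (rightChain z' w') a b := by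
  rcases h with ⟨i, rfl, rfl⟩ | ⟨i, rfl, rfl⟩ | ⟨rfl, rfl⟩ | ⟨rfl, rfl⟩ | ⟨i, hi, rfl, rfl⟩ |
    ⟨i, hi, rfl, rfl⟩ | ⟨rfl, rfl⟩ | ⟨rfl, rfl⟩ | ⟨rfl, rfl⟩ | ⟨j, a', b', ha', hb', rfl, rfl⟩
  · rw [← leftChain_w w z, ← leftChain_w w z]
    exact .left rfl
  · rw [← rightChain_w' z' w', ← rightChain_w' z' w']
    exact .right rfl
  · rw [← leftChain_w w z, ← leftChain_z w z]
    exact .left rfl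
  · rw [← leftChain_w w z, ← rightChain_z' z' w']
    exact .cross rfl
  · rw [← leftChain_z w z, ← leftChain_z w z]
    exact .left rfl
  · rw [← rightChain_z' z' w', ← rightChain_z' z' w']
    exact .right rfl
  · rw [← leftChain_z w z, ← rightChain_w' z' w']
    exact .cross (by simp only [Fin.val_zero]; omega)
  · rw [← rightChain_z' z' w', ← rightChain_w' z' w']
    exact .right (by simp only [Fin.val_zero]; omega)
  · rw [← leftChain_last w z (by omega), ← rightChain_zero z' w' (by omega)]
    exact .back
  · rw [← leftChain_z w z, ← rightChain_z' z' w']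
    exact .cross (by dsimp only; omega)

variable [PartialOrder Q]

lemma isTwoChain_of_covBy_iff
    (hbij : Function.Bijective (Sum.elim (Sum.elim z z') (Sum.elim w w')))
    (hcov : ∀ a b : Q, a ⋖ b ↔ TypeBCovers m n n' p hm z z' w w' ι a b) :
    IsTwoChain (leftChain w z) (rightChain z' w') := by
  have hlt : ∀ a b : Q, TypeBCovers m n n' p hm z z' w w' ι a b → a < b :=
    fun a b h => ((hcov a b).2 h).lt
  simp only [TypeBCovers, or_imp, forall_and] at hlt
  obtain ⟨hw, hw', hwz, -, hz, hz', hzw', hz'w', hz'z, -⟩ := hlt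
  replace hw : StrictMono w := Fin.strictMono_iff_lt_succ.2 fun i => hw _ _ ⟨i, rfl, rfl⟩
  replace hw' : StrictMono w' := Fin.strictMono_iff_lt_succ.2 fun i => hw' _ _ ⟨i, rfl, rfl⟩
  replace hz : StrictMono z := strictMono_of_lt_mk_succ fun i hi => hz _ _ ⟨i, hi, rfl, rfl⟩
  replace hz' : StrictMono z' := strictMono_of_lt_mk_succ fun i hi => hz' _ _ ⟨i, hi, rfl, rfl⟩
  replace hwz (i j) : w i < z j :=
    (hw.monotone i.le_last).trans_lt <| (hwz _ _ ⟨rfl, rfl⟩).trans_le <| hz.monotone (Nat.zero_le j)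
  replace hz'w' (i j) : z' i < w' j :=
    (hz'.monotone (Nat.le_sub_one_of_lt i.isLt)).trans_lt <|
      (hz'w' _ _ ⟨rfl, rfl⟩).trans_le <| hw'.monotone j.zero_le
  exact {
    bijective := bijective_leftChain_rightChain hbij
    strictMono_left := (strictMono_append hw hz hwz).comp (Fin.cast_strictMono _)
    strictMono_right := strictMono_append (l := n' + 1) hz' hw' hz'w'
    bot_lt_top := by
      rw [rightChain_zero _ _ (by omega), leftChain_last _ _ (by omega)]
      exact hz'z _ _ ⟨rfl, rfl⟩
    top_lt := by
      rw [leftChain_last _ _ (by omega)]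
      exact (hzw' _ _ ⟨rfl, rfl⟩).trans_eq (rightChain_w' z' w' 0).symm
    step_of_covBy := fun a b hab => ((hcov a b).1 hab).twoChainStep }

lemma nuH_eq_raisedRank [DecidableEq Q] [DecidableRel ((· ≤ ·) : Q → Q → Prop)]
    [LocallyFiniteOrder Q] (hP : IsTwoChain (leftChain w z) (rightChain z' w')) (h : ℕ) :
    nuH m n' h hm z z' w' = hP.raisedRank (m - 1 - h) := by
  have hmem (q : Q) := hP.bot_le_and_ne_top_iff (by omega) q
  rw [rightChain_zero _ _ (by omega), leftChain_last _ _ (by omega)] at hmem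
  funext q
  simp only [nuH, hmem, ← rightChain_last z' w', hP.intervalRank_last (show 2 ≤ m by omega)]
  rcases hP.exists_eq q with ⟨i, rfl⟩ | ⟨j, rfl⟩
  · have hi : leftChain w z i ∉ Set.range (rightChain z' w') :=
      fun ⟨j, hj⟩ => hP.left_ne_right i j hj.symm
    rw [if_neg hi, hP.raisedRank_left, hP.raisedRank_left]
    omega
  · rw [if_pos (Set.mem_range_self j), hP.raisedRank_right, hP.raisedRank_right]

end TypeB

/-- for a poset of type (b), the functions `ν_h` (`1 ≤ h ≤ m−1`) are
pairwise distinct and are exactly the minimal elements of `(T(P), ≤)`; in particular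
there are exactly `m − 1` minimal elements. -/
theorem typeB_minimal_elements
    {Q : Type*} [Fintype Q] [PartialOrder Q] [DecidableEq Q]
    [DecidableRel ((· ≤ ·) : Q → Q → Prop)]
    (m n n' p : ℕ) (hm : 3 ≤ m)
    (z z' : Fin m → Q) (w : Fin (n + 1) → Q) (w' : Fin (n' + 1) → Q)
    (ι : Fin p → ℕ)
    (hι₁ : ∀ j, 1 ≤ ι j) (hι₂ : ∀ j, ι j ≤ m - 1) (hιmono : StrictMono ι)
    (hbij : Function.Bijective
      (Sum.elim (Sum.elim z z') (Sum.elim w w') :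
        (Fin m ⊕ Fin m) ⊕ (Fin (n + 1) ⊕ Fin (n' + 1)) → Q))
    (hcov : ∀ a b : Q, a ⋖ b ↔ TypeBCovers m n n' p hm z z' w w' ι a b)
    (hbot : ∀ q : Q, w 0 ≤ q)
    (htop : ∀ q : Q, q ≤ w' (Fin.last n')) :
    (∀ h : ℕ, 1 ≤ h → h ≤ m - 1 →
      IsMinTPAt (w' (Fin.last n')) (nuH m n' h hm z z' w')) ∧
    (∀ h h' : ℕ, 1 ≤ h → h ≤ m - 1 → 1 ≤ h' → h' ≤ m - 1 →
      nuH m n' h hm z z' w' = nuH m n' h' hm z z' w' → h = h') ∧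
    (∀ ν : Q → ℕ, IsMinTPAt (w' (Fin.last n')) ν →
      ∃ h : ℕ, 1 ≤ h ∧ h ≤ m - 1 ∧ ν = nuH m n' h hm z z' w') ∧
    {ν : Q → ℕ | IsMinTPAt (w' (Fin.last n')) ν}.ncard = m - 1 := by
  let _ : DecidableLT Q := decidableLTOfDecidableLE
  let _ : LocallyFiniteOrder Q := Fintype.toLocallyFiniteOrder
  have hP := isTwoChain_of_covBy_iff hbij hcov
  simp only [nuH_eq_raisedRank hP, ← rightChain_last z' w']
  refine ⟨fun h h₁ _ => hP.isMinTPAt_raisedRank (by omega), fun h h' _ h₂ _ h₂' heq => ?_,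
    fun ν hν => ?_, hP.ncard_isMinTPAt (by omega)⟩
  · have := hP.raisedRank_injective heq
    omega
  · obtain ⟨c, hc, rfl⟩ := (hP.isMinTPAt_iff (by omega)).1 hν
    exact ⟨m - 1 - c, by omega, by omega, by rw [Nat.sub_sub_self hc.le]⟩
end

section
/- Let P⁺ be a poset of type (a) with parameters m ≥ 3 and n, n′ ≥ 0, and set r = rank P⁺ = n + m + n′ + 1. Then for all α₁ ≤ α₂ in P⁺, rank[x₀,α₁] + rank[α₁,α₂] + rank[α₂,∞] < r if and only if (α₁,α₂) = (z′₁, z_m) or (α₁,α₂) = (z₁, z′_m). In particular rank[x₀,x] + rank[x,∞] = r for every x ∈ P⁺. -/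
/-- The covering relations of a poset of type (a) with parameters `m ≥ 3`, `n, n' ≥ 0`. -/
def TypeACovers {Q : Type*} (m n n' : ℕ) (hm : 3 ≤ m)
    (z z' : Fin m → Q) (w : Fin (n + 1) → Q) (w' : Fin (n' + 1) → Q)
    (a b : Q) : Prop :=
  (∃ i : Fin n, a = w i.castSucc ∧ b = w i.succ) ∨
  (∃ i : Fin n', a = w' i.castSucc ∧ b = w' i.succ) ∨
  (a = w (Fin.last n) ∧ b = z ⟨0, by omega⟩) ∨
  (a = w (Fin.last n) ∧ b = z' ⟨0, by omega⟩) ∨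
  (∃ (i : ℕ) (h : i + 1 < m), a = z ⟨i, by omega⟩ ∧ b = z ⟨i + 1, h⟩) ∨
  (∃ (i : ℕ) (h : i + 1 < m), a = z' ⟨i, by omega⟩ ∧ b = z' ⟨i + 1, h⟩) ∨
  (a = z ⟨m - 1, by omega⟩ ∧ b = w' 0) ∨
  (a = z' ⟨m - 1, by omega⟩ ∧ b = w' 0) ∨
  (a = z' ⟨0, by omega⟩ ∧ b = z ⟨m - 1, by omega⟩) ∨
  (a = z ⟨0, by omega⟩ ∧ b = z' ⟨m - 1, by omega⟩)

/-!
Let `h` be the position of an element along its chain, with `z` and `z'` running in parallel. Every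
cover raises `h` by one, except the long covers `z'₁ ⋖ z_m` and `z₁ ⋖ z'_m`, which raise it by
`m - 1 ≥ 2`. A long cover followed or preceded by another cover can be bypassed: `w_n ⋖ z'₁ ⋖ z_m`
by `w_n ⋖ z₁ ⋖ ⋯ ⋖ z_m`, and `z'₁ ⋖ z_m ⋖ w'₀` by `z'₁ ⋖ ⋯ ⋖ z'_m ⋖ w'₀`. Hence
`rank[a, b] = h b - h a` whenever `a ≤ b`, unless `a ⋖ b` is itself long, when `rank[a, b] = 1`, and
the sum of the three ranks telescopes to `r` unless `α₁ ⋖ α₂` is long.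
-/

section AlmostRank

variable {Q : Type*} [PartialOrder Q] {h : Q → ℕ} {a b : Q}

theorem intervalRank_le_one_of_covBy (hab : a ⋖ b) : intervalRank a b ≤ 1 := by
  refine csSup_le' ?_
  rintro k ⟨c, hc, rfl, rfl⟩
  by_contra! hk
  have hlo : (0 : Fin (k + 1)) < ⟨1, by omega⟩ := Fin.mk_lt_mk.2 one_pos
  have hhi : ⟨1, by omega⟩ < Fin.last k := Fin.mk_lt_mk.2 hk
  exact hab.2 (hc hlo) (hc hhi)

/-- `GradedPath h a b` means that `b` is reached from `a` by covers, each raising `h` by one. -/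
def GradedPath (h : Q → ℕ) : Q → Q → Prop :=
  Relation.ReflTransGen fun a b => a ⋖ b ∧ h b = h a + 1

namespace GradedPath

theorem of_covBy (hab : a ⋖ b) (hstep : h b = h a + 1) : GradedPath h a b :=
  .single ⟨hab, hstep⟩

theorem trans {c : Q} (hab : GradedPath h a b) (hbc : GradedPath h b c) : GradedPath h a c :=
  Relation.ReflTransGen.trans hab hbc

theorem exists_ltSeries (hab : GradedPath h a b) :
    ∃ p : LTSeries Q, p.head = a ∧ p.last = b ∧ h a + p.length = h b := by
  induction hab with
  | refl => exact ⟨RelSeries.singleton _ a, rfl, rfl, rfl⟩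
  | tail _ hbc ih =>
    obtain ⟨p, rfl, rfl, hp⟩ := ih
    refine ⟨p.snoc _ hbc.1.lt, p.head_snoc _ _, p.last_snoc _ _, ?_⟩
    simp only [RelSeries.snoc_length, hbc.2, ← hp, add_assoc]

theorem add_intervalRank_eq (hh : StrictMono h) (hab : GradedPath h a b) :
    h a + intervalRank a b = h b := by
  obtain ⟨p, rfl, rfl, hp⟩ := hab.exists_ltSeries
  suffices hgreatest : IsGreatest {n | ∃ c : Fin (n + 1) → Q, StrictMono c ∧
      c 0 = p.head ∧ c (Fin.last n) = p.last} p.length by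
    rw [intervalRank, hgreatest.csSup_eq, hp]
  refine ⟨⟨p, p.strictMono, rfl, rfl⟩, ?_⟩
  rintro k ⟨c, hc, hhead, hlast⟩
  have hk : h (c 0) + k ≤ h (c (Fin.last k)) :=
    (LTSeries.mk k (h ∘ c) (hh.comp hc)).head_add_length_le_nat
  rw [hhead, hlast] at hk
  omega

end GradedPath

/-- A cover raising the height `h` by at least two. -/
def IsLongCover (h : Q → ℕ) (a b : Q) : Prop :=
  a ⋖ b ∧ h a + 1 < h b

theorem IsLongCover.add_intervalRank_lt (hab : IsLongCover h a b) :
    h a + intervalRank a b < h b :=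
  (Nat.add_le_add_left (intervalRank_le_one_of_covBy hab.1) _).trans_lt hab.2

theorem GradedPath.of_covBy_of_not_isLongCover (hab : a ⋖ b) (hlt : h a < h b)
    (hlong : ¬ IsLongCover h a b) : GradedPath h a b :=
  .of_covBy hab (le_antisymm (not_lt.1 fun hgap => hlong ⟨hab, hgap⟩) hlt)

/-- `h` is a rank function except for isolated long covers: any two consecutive covers can be
replaced by a chain of covers, each raising `h` by one. -/
structure IsAlmostRank (h : Q → ℕ) : Prop where
  strictMono : StrictMono h
  gradedPath_of_covBy_of_covBy : ∀ ⦃a b c : Q⦄, a ⋖ b → b ⋖ c → GradedPath h a c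

namespace IsAlmostRank

variable [LocallyFiniteOrder Q] (hh : IsAlmostRank h)
include hh

theorem gradedPath_or_covBy (hab : a ≤ b) : GradedPath h a b ∨ a ⋖ b := by
  induction le_iff_reflTransGen_covBy.1 hab with
  | refl => exact .inl .refl
  | @tail b c hab' hbc ih =>
    rcases ih (le_iff_reflTransGen_covBy.2 hab') with hpath | hcov
    · rcases hpath.cases_tail with rfl | ⟨d, had, hdb⟩
      · exact .inr hbc
      · exact .inl (had.trans (hh.gradedPath_of_covBy_of_covBy hdb.1 hbc))
    · exact .inl (hh.gradedPath_of_covBy_of_covBy hcov hbc)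

theorem add_intervalRank_eq (hab : a ≤ b) (hlong : ¬ IsLongCover h a b) :
    h a + intervalRank a b = h b :=
  GradedPath.add_intervalRank_eq hh.strictMono <|
    (hh.gradedPath_or_covBy hab).elim id fun hcov =>
      .of_covBy_of_not_isLongCover hcov (hh.strictMono hcov.lt) hlong

variable {x₀ x₁ : Q} (hbot : IsBot x₀) (htop : IsTop x₁)
  (hx₀ : ∀ q, ¬ IsLongCover h x₀ q) (hx₁ : ∀ q, ¬ IsLongCover h q x₁)
include hbot htop hx₀ hx₁

theorem intervalRank_add_intervalRank_eq (q : Q) :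
    intervalRank x₀ q + intervalRank q x₁ = intervalRank x₀ x₁ := by
  have hlower := hh.add_intervalRank_eq (hbot q) (hx₀ q)
  have hupper := hh.add_intervalRank_eq (htop q) (hx₁ q)
  have htotal := hh.add_intervalRank_eq (hbot x₁) (hx₀ x₁)
  omega

theorem intervalRank_add_add_lt_iff (hab : a ≤ b) :
    intervalRank x₀ a + intervalRank a b + intervalRank b x₁ < intervalRank x₀ x₁ ↔
      IsLongCover h a b := by
  have hbelow_a := hh.add_intervalRank_eq (hbot a) (hx₀ a)
  have hbelow_b := hh.add_intervalRank_eq (hbot b) (hx₀ b)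
  have hsplit := hh.intervalRank_add_intervalRank_eq hbot htop hx₀ hx₁ b
  constructor
  · contrapose
    intro hlong
    have hgraded := hh.add_intervalRank_eq hab hlong
    omega
  · intro hlong
    have hdeficient := hlong.add_intervalRank_lt
    omega

end IsAlmostRank

end AlmostRank

/-- `Q` is a poset of type (a): the chains `z`, `z'`, `w`, `w'` exhaust it without repetition, and
its covering relations are those of `TypeACovers`. -/
structure IsTypeA {Q : Type*} [PartialOrder Q] (m n n' : ℕ) (hm : 3 ≤ m)
    (z z' : Fin m → Q) (w : Fin (n + 1) → Q) (w' : Fin (n' + 1) → Q) : Prop where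
  bijective : Function.Bijective
    (Sum.elim (Sum.elim z z') (Sum.elim w w') :
      (Fin m ⊕ Fin m) ⊕ (Fin (n + 1) ⊕ Fin (n' + 1)) → Q)
  covBy_iff : ∀ a b : Q, a ⋖ b ↔ TypeACovers m n n' hm z z' w w' a b

namespace IsTypeA

variable {Q : Type*} [PartialOrder Q] {m n n' : ℕ} {hm : 3 ≤ m}
  {z z' : Fin m → Q} {w : Fin (n + 1) → Q} {w' : Fin (n' + 1) → Q}

/-- The position in a maximal chain `w₀, …, w_n, z₁, …, z_m, w'₀, …, w'_{n'}`, or the one through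
`z'` instead of `z`, on the index type of a poset of type (a). -/
def position (m n n' : ℕ) : (Fin m ⊕ Fin m) ⊕ (Fin (n + 1) ⊕ Fin (n' + 1)) → ℕ :=
  Sum.elim (Sum.elim (fun i => n + 1 + i) (fun i => n + 1 + i))
    (Sum.elim (fun i => i) (fun i => n + m + 1 + i))

/-- The height function on a poset of type (a), given by `position`: it is a rank function except
for the long covers `z'₁ ⋖ z_m` and `z₁ ⋖ z'_m`. -/
noncomputable def height (P : IsTypeA m n n' hm z z' w w') : Q → ℕ :=
  position m n n' ∘ (Equiv.ofBijective _ P.bijective).symm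

variable (P : IsTypeA m n n' hm z z' w w')

theorem height_sumElim (x : (Fin m ⊕ Fin m) ⊕ (Fin (n + 1) ⊕ Fin (n' + 1))) :
    P.height (Sum.elim (Sum.elim z z') (Sum.elim w w') x) = position m n n' x :=
  congrArg _ ((Equiv.ofBijective _ P.bijective).symm_apply_apply x)

theorem height_z (i : Fin m) : P.height (z i) = n + 1 + i :=
  P.height_sumElim (.inl (.inl i))

theorem height_z' (i : Fin m) : P.height (z' i) = n + 1 + i :=
  P.height_sumElim (.inl (.inr i))

theorem height_w (i : Fin (n + 1)) : P.height (w i) = i :=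
  P.height_sumElim (.inr (.inl i))

theorem height_w' (i : Fin (n' + 1)) : P.height (w' i) = n + m + 1 + i :=
  P.height_sumElim (.inr (.inr i))

include P

theorem z_ne_z' (i j : Fin m) : z i ≠ z' j :=
  P.bijective.injective.ne (a₁ := .inl (.inl i)) (a₂ := .inl (.inr j)) (by simp)

theorem swap : IsTypeA m n n' hm z' z w w' where
  bijective := by
    convert P.bijective.comp ((Equiv.sumComm _ _).sumCongr (Equiv.refl _)).bijective using 1
    ext ((i | i) | (i | i)) <;> rfl
  covBy_iff a b := by
    rw [P.covBy_iff, TypeACovers, TypeACovers, ← eq_iff_iff]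
    ac_rfl

theorem swap_height : P.swap.height = P.height := by
  funext q
  obtain ⟨((i | i) | (i | i)), rfl⟩ := P.bijective.surjective q
  · exact (P.swap.height_z' i).trans (P.height_z i).symm
  · exact (P.swap.height_z i).trans (P.height_z' i).symm
  · exact (P.swap.height_w i).trans (P.height_w i).symm
  · exact (P.swap.height_w' i).trans (P.height_w' i).symm

theorem eq_of_covBy_z_zero {a : Q} (ha : a ⋖ z ⟨0, by omega⟩) : a = w (Fin.last n) := by
  have hheight := P.height_z ⟨0, by omega⟩
  rw [P.covBy_iff, TypeACovers] at ha
  grind [P.z_ne_z', P.height_z, P.height_w, P.height_w']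

theorem eq_of_z_last_covBy {b : Q} (hb : z ⟨m - 1, by omega⟩ ⋖ b) : b = w' 0 := by
  have hheight := P.height_z ⟨m - 1, by omega⟩
  rw [P.covBy_iff, TypeACovers] at hb
  grind [P.z_ne_z', P.height_z, P.height_w, P.height_w']

theorem isLongCover_height_iff {a b : Q} :
    IsLongCover P.height a b ↔
      (a = z' ⟨0, by omega⟩ ∧ b = z ⟨m - 1, by omega⟩) ∨
        (a = z ⟨0, by omega⟩ ∧ b = z' ⟨m - 1, by omega⟩) := by
  rw [IsLongCover, P.covBy_iff, TypeACovers]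
  grind [P.height_z, P.height_z', P.height_w, P.height_w']

theorem height_lt_of_covBy {a b : Q} (hab : a ⋖ b) : P.height a < P.height b := by
  rw [P.covBy_iff, TypeACovers] at hab
  grind [P.height_z, P.height_z', P.height_w, P.height_w']

theorem gradedPath_z_zero_z (i : ℕ) (hi : i < m) :
    GradedPath P.height (z ⟨0, by omega⟩) (z ⟨i, hi⟩) := by
  induction i with
  | zero => exact .refl
  | succ i ih =>
    have hcov : z ⟨i, by omega⟩ ⋖ z ⟨i + 1, hi⟩ := by
      rw [P.covBy_iff, TypeACovers]
      grind
    exact (ih _).trans (.of_covBy hcov (by simp only [P.height_z]; omega))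

theorem gradedPath_w_last_z_last :
    GradedPath P.height (w (Fin.last n)) (z ⟨m - 1, by omega⟩) := by
  have hcov : w (Fin.last n) ⋖ z ⟨0, by omega⟩ := by
    rw [P.covBy_iff, TypeACovers]
    grind
  exact .trans (.of_covBy hcov (by simp [P.height_w, P.height_z])) (P.gradedPath_z_zero_z _ _)

theorem gradedPath_z_zero_w'_zero : GradedPath P.height (z ⟨0, by omega⟩) (w' 0) := by
  have hcov : z ⟨m - 1, by omega⟩ ⋖ w' 0 := by
    rw [P.covBy_iff, TypeACovers]
    grind
  exact (P.gradedPath_z_zero_z _ _).trans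
    (.of_covBy hcov (by simp only [P.height_w', P.height_z, Fin.val_zero]; omega))

theorem gradedPath_of_isLongCover_of_covBy {a b c : Q} (hab : IsLongCover P.height a b)
    (hbc : b ⋖ c) : GradedPath P.height a c := by
  rcases P.isLongCover_height_iff.1 hab with ⟨rfl, rfl⟩ | ⟨rfl, rfl⟩
  · rw [P.eq_of_z_last_covBy hbc, ← P.swap_height]
    exact P.swap.gradedPath_z_zero_w'_zero
  · rw [P.swap.eq_of_z_last_covBy hbc]
    exact P.gradedPath_z_zero_w'_zero

theorem gradedPath_of_covBy_of_isLongCover {a b c : Q} (hab : a ⋖ b)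
    (hbc : IsLongCover P.height b c) : GradedPath P.height a c := by
  rcases P.isLongCover_height_iff.1 hbc with ⟨rfl, rfl⟩ | ⟨rfl, rfl⟩
  · rw [P.swap.eq_of_covBy_z_zero hab]
    exact P.gradedPath_w_last_z_last
  · rw [P.eq_of_covBy_z_zero hab, ← P.swap_height]
    exact P.swap.gradedPath_w_last_z_last

theorem isAlmostRank_height [LocallyFiniteOrder Q] : IsAlmostRank P.height where
  strictMono := (strictMono_iff_forall_covBy _).2 fun _ _ => P.height_lt_of_covBy
  gradedPath_of_covBy_of_covBy a b c hab hbc := by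
    by_cases hab' : IsLongCover P.height a b
    · exact P.gradedPath_of_isLongCover_of_covBy hab' hbc
    by_cases hbc' : IsLongCover P.height b c
    · exact P.gradedPath_of_covBy_of_isLongCover hab hbc'
    · exact (GradedPath.of_covBy_of_not_isLongCover hab (P.height_lt_of_covBy hab) hab').trans
        (GradedPath.of_covBy_of_not_isLongCover hbc (P.height_lt_of_covBy hbc) hbc')

theorem not_isLongCover_w (i : Fin (n + 1)) (q : Q) : ¬ IsLongCover P.height (w i) q := by
  have hheight := P.height_w i
  rw [P.isLongCover_height_iff]
  grind [P.height_z, P.height_z']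

theorem not_isLongCover_w' (q : Q) (i : Fin (n' + 1)) : ¬ IsLongCover P.height q (w' i) := by
  have hheight := P.height_w' i
  rw [P.isLongCover_height_iff]
  grind [P.height_z, P.height_z']

end IsTypeA

/-- in a poset of type (a), with `r = rank P⁺ = n + m + n' + 1`, for
`α₁ ≤ α₂` the strict inequality
`rank[x₀,α₁] + rank[α₁,α₂] + rank[α₂,∞] < r` holds iff `(α₁,α₂) = (z'₁, z_m)` or
`(α₁,α₂) = (z₁, z'_m)`; in particular `rank[x₀,x] + rank[x,∞] = r` for every `x`. -/
theorem typeA_rank_characterization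
    {Q : Type*} [Fintype Q] [PartialOrder Q]
    (m n n' : ℕ) (hm : 3 ≤ m)
    (z z' : Fin m → Q) (w : Fin (n + 1) → Q) (w' : Fin (n' + 1) → Q)
    (hbij : Function.Bijective
      (Sum.elim (Sum.elim z z') (Sum.elim w w') :
        (Fin m ⊕ Fin m) ⊕ (Fin (n + 1) ⊕ Fin (n' + 1)) → Q))
    (hcov : ∀ a b : Q, a ⋖ b ↔ TypeACovers m n n' hm z z' w w' a b)
    (hbot : ∀ q : Q, w 0 ≤ q)
    (htop : ∀ q : Q, q ≤ w' (Fin.last n')) :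
    intervalRank (w 0) (w' (Fin.last n')) = n + m + n' + 1 ∧
    (∀ a₁ a₂ : Q, a₁ ≤ a₂ →
      (intervalRank (w 0) a₁ + intervalRank a₁ a₂ + intervalRank a₂ (w' (Fin.last n')) <
          n + m + n' + 1 ↔
        ((a₁ = z' ⟨0, by omega⟩ ∧ a₂ = z ⟨m - 1, by omega⟩) ∨
         (a₁ = z ⟨0, by omega⟩ ∧ a₂ = z' ⟨m - 1, by omega⟩)))) ∧
    (∀ q : Q,
      intervalRank (w 0) q + intervalRank q (w' (Fin.last n')) = n + m + n' + 1) := by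
  classical
  let _ : LocallyFiniteOrder Q := Fintype.toLocallyFiniteOrder
  have P : IsTypeA m n n' hm z z' w w' := ⟨hbij, hcov⟩
  have hP := P.isAlmostRank_height
  have hw := P.not_isLongCover_w 0
  have hw' := (P.not_isLongCover_w' · (Fin.last n'))
  have hrank : intervalRank (w 0) (w' (Fin.last n')) = n + m + n' + 1 := by
    have hgraded := hP.add_intervalRank_eq (hbot (w' (Fin.last n'))) (hw _)
    simp only [P.height_w, P.height_w', Fin.val_zero, Fin.val_last] at hgraded
    omega
  rw [← hrank]
  refine ⟨rfl, fun a₁ a₂ hle => ?_, hP.intervalRank_add_intervalRank_eq hbot htop hw hw'⟩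
  rw [hP.intervalRank_add_add_lt_iff hbot htop hw hw' hle, P.isLongCover_height_iff]
end
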